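/- Let S be a finite set of n ≥ 2 points in the plane in general position. Then every edge-labeled tree in ℒ(S) can be transformed into any other edge-labeled tree in ℒ(S) by a sequence of at most 11n − 22 rotations (with the label of each replaced edge transferred to its replacement). -/

import Mathlib

open scoped Classical

noncomputable section

/-- Points in the plane. -/
abbrev Pt : Type := ℝ × ℝ

/-- The closed straight-line segment spanned by an (unordered) edge. -/
def segOf (e : Sym2 Pt) : Set Pt :=
  Sym2.lift ⟨fun p q => segment ℝ p q, fun p q => segment_symm ℝ p q⟩ e

/-- The set of endpoints of an edge. -/
def epts (e : Sym2 Pt) : Set Pt := {p | p ∈ e}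

/-- Two edges intersect in at most common endpoints (they do not cross). -/
def NoCrossPair (e f : Sym2 Pt) : Prop := segOf e ∩ segOf f ⊆ epts e ∩ epts f

/-- A set of edges is noncrossing: any two distinct edges meet in at most a common endpoint. -/
def NoCross (E : Finset (Sym2 Pt)) : Prop := ∀ e ∈ E, ∀ f ∈ E, e ≠ f → NoCrossPair e f

/-- `E` is the edge set of a noncrossing straight-line spanning tree on the point set `S`:
all edges are nondegenerate with endpoints in `S`, pairwise noncrossing, there are
`|S| - 1` of them, and they connect all of `S`. -/
def IsPST (S : Finset Pt) (E : Finset (Sym2 Pt)) : Prop :=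
  (∀ e ∈ E, ¬ e.IsDiag ∧ ∀ p ∈ e, p ∈ S) ∧
  NoCross E ∧ E.card + 1 = S.card ∧
  ∀ p ∈ S, ∀ q ∈ S, Relation.ReflTransGen (fun a b => s(a, b) ∈ E) p q

/-- `S` is in general position: no three of its points are collinear. -/
def GenPos (S : Finset Pt) : Prop :=
  ∀ p ∈ S, ∀ q ∈ S, ∀ r ∈ S, p ≠ q → p ≠ r → q ≠ r → ¬ Collinear ℝ ({p, q, r} : Set Pt)

/-- `S` is in convex position: every point of `S` is a vertex of the convex hull of `S`. -/
def ConvexPos (S : Finset Pt) : Prop :=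
  ∀ p ∈ S, p ∉ convexHull ℝ ((S : Set Pt) \ {p})

/-- The open interior of the triangle with vertices `p`, `q`, `r`. -/
def triInt (p q r : Pt) : Set Pt := interior (convexHull ℝ ({p, q, r} : Set Pt))

/-- `y` can be reached from `x` by a sequence of at most `m` `step`-operations. -/
def ReachesIn {α : Type*} (step : α → α → Prop) (m : ℕ) (x y : α) : Prop :=
  ∃ k ≤ m, ∃ f : ℕ → α, f 0 = x ∧ f k = y ∧ ∀ i < k, step (f i) (f (i + 1))

/-- A simultaneous rotation from `E₁` to `E₂`: a bijection `π` between the removed and the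
inserted edges such that each `e` shares an endpoint with `π e` and `π e` crosses no edge
of `E₁`. -/
def SimRotation (S : Finset Pt) (E₁ E₂ : Finset (Sym2 Pt)) : Prop :=
  IsPST S E₁ ∧ IsPST S E₂ ∧ ∃ π : Sym2 Pt → Sym2 Pt,
    Set.BijOn π ↑(E₁ \ E₂) ↑(E₂ \ E₁) ∧
    ∀ e ∈ E₁ \ E₂, (∃ p, p ∈ e ∧ p ∈ π e) ∧ ∀ f ∈ E₁, NoCrossPair (π e) f

/-- An empty-triangle rotation replaces an edge `pq` by an adjacent edge `pr` such that
no edge of either tree meets the interior of the triangle `pqr`. -/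
def EmptyTriRot (S : Finset Pt) (E₁ E₂ : Finset (Sym2 Pt)) : Prop :=
  IsPST S E₁ ∧ IsPST S E₂ ∧ ∃ p q r : Pt,
    E₁ \ E₂ = {s(p, q)} ∧ E₂ \ E₁ = {s(p, r)} ∧
    ∀ g ∈ E₁ ∪ E₂, Disjoint (segOf g) (triInt p q r)

/-- A simultaneous empty-triangle rotation. -/
def SimEmptyTriRot (S : Finset Pt) (E₁ E₂ : Finset (Sym2 Pt)) : Prop :=
  IsPST S E₁ ∧ IsPST S E₂ ∧ ∃ π : Sym2 Pt → Sym2 Pt,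
    Set.BijOn π ↑(E₁ \ E₂) ↑(E₂ \ E₁) ∧
    ∀ e ∈ E₁ \ E₂, ∃ p q r : Pt, e = s(p, q) ∧ π e = s(p, r) ∧
      ∀ g ∈ E₁ ∪ E₂, Disjoint (segOf g) (triInt p q r)

/-- An edge slide replaces `pq` by `pr`, where `qr` is an edge of both trees and no edge of
either tree meets the interior of the triangle `pqr`. -/
def EdgeSlide (S : Finset Pt) (E₁ E₂ : Finset (Sym2 Pt)) : Prop :=
  IsPST S E₁ ∧ IsPST S E₂ ∧ ∃ p q r : Pt,
    E₁ \ E₂ = {s(p, q)} ∧ E₂ \ E₁ = {s(p, r)} ∧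
    s(q, r) ∈ E₁ ∧ s(q, r) ∈ E₂ ∧
    ∀ g ∈ E₁ ∪ E₂, Disjoint (segOf g) (triInt p q r)

/-- A simultaneous edge slide. -/
def SimEdgeSlide (S : Finset Pt) (E₁ E₂ : Finset (Sym2 Pt)) : Prop :=
  IsPST S E₁ ∧ IsPST S E₂ ∧ ∃ π : Sym2 Pt → Sym2 Pt,
    Set.BijOn π ↑(E₁ \ E₂) ↑(E₂ \ E₁) ∧
    ∀ e ∈ E₁ \ E₂, ∃ p q r : Pt, e = s(p, q) ∧ π e = s(p, r) ∧
      s(q, r) ∈ E₁ ∧ s(q, r) ∈ E₂ ∧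
      ∀ g ∈ E₁ ∪ E₂, Disjoint (segOf g) (triInt p q r)

/-- `e` is an edge of the convex hull of `S`: it joins two distinct points of `S` and its
segment lies on the boundary of the convex hull of `S`. -/
def IsHullEdge (S : Finset Pt) (e : Sym2 Pt) : Prop :=
  ∃ u v : Pt, e = s(u, v) ∧ u ∈ S ∧ v ∈ S ∧ u ≠ v ∧
    segment ℝ u v ⊆ frontier (convexHull ℝ (S : Set Pt))

/-- The spanning star centered at `v`. -/
def starAt (S : Finset Pt) (v : Pt) : Finset (Sym2 Pt) := (S.erase v).image (fun w => s(v, w))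

/-- An edge-labeled tree: an edge set together with a labeling function. -/
abbrev LTree := Finset (Sym2 Pt) × (Sym2 Pt → ℕ)

/-- `T` is an edge-labeled noncrossing straight-line spanning tree on `S`: its edge set is in
`𝒯(S)` and its labeling is a bijection from the edges onto `{1, …, |S| - 1}`
(normalized to `0` on non-edges). -/
def IsLabeledPST (S : Finset Pt) (T : LTree) : Prop :=
  IsPST S T.1 ∧ Set.BijOn T.2 ↑T.1 (Set.Icc 1 (S.card - 1)) ∧ ∀ e, e ∉ T.1 → T.2 e = 0

/-- A simultaneous exchange on edge-labeled trees: an arbitrary bijection between removed and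
inserted edges transferring labels, all common edges keeping their labels. -/
def LabSimExchange (S : Finset Pt) (T₁ T₂ : LTree) : Prop :=
  IsLabeledPST S T₁ ∧ IsLabeledPST S T₂ ∧ ∃ π : Sym2 Pt → Sym2 Pt,
    Set.BijOn π ↑(T₁.1 \ T₂.1) ↑(T₂.1 \ T₁.1) ∧
    (∀ e ∈ T₁.1 \ T₂.1, T₂.2 (π e) = T₁.2 e) ∧
    ∀ e ∈ T₁.1 ∩ T₂.1, T₂.2 e = T₁.2 e

/-- A rotation on edge-labeled trees: the removed and inserted edges share an endpoint and do
not cross, the label of the removed edge is transferred, and all other labels are kept. -/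
def LabRotation (S : Finset Pt) (T₁ T₂ : LTree) : Prop :=
  IsLabeledPST S T₁ ∧ IsLabeledPST S T₂ ∧ ∃ e₁ e₂ : Sym2 Pt,
    T₁.1 \ T₂.1 = {e₁} ∧ T₂.1 \ T₁.1 = {e₂} ∧
    (∃ p, p ∈ e₁ ∧ p ∈ e₂) ∧ NoCrossPair e₁ e₂ ∧
    T₂.2 e₂ = T₁.2 e₁ ∧ ∀ e ∈ T₁.1 ∩ T₂.1, T₂.2 e = T₁.2 e

/-- An edge slide on edge-labeled trees, transferring the label of the slid edge. -/
def LabEdgeSlide (S : Finset Pt) (T₁ T₂ : LTree) : Prop :=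
  IsLabeledPST S T₁ ∧ IsLabeledPST S T₂ ∧ ∃ p q r : Pt,
    T₁.1 \ T₂.1 = {s(p, q)} ∧ T₂.1 \ T₁.1 = {s(p, r)} ∧
    s(q, r) ∈ T₁.1 ∧ s(q, r) ∈ T₂.1 ∧
    (∀ g ∈ T₁.1 ∪ T₂.1, Disjoint (segOf g) (triInt p q r)) ∧
    T₂.2 (s(p, r)) = T₁.2 (s(p, q)) ∧ ∀ e ∈ T₁.1 ∩ T₂.1, T₂.2 e = T₁.2 e

/-!
Let `v` be a point of `S` farthest from some point outside `S`. A projective map sending `v` to the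
vertical point at infinity turns the edges at `v` into vertical rays and the other edges of a tree
into a noncrossing set of segments. Among these segments one has both endpoints visible from above,
and joining `v` to such an endpoint keeps the tree noncrossing; after at most `n - 2` such
rotations the tree is the star at `v`. Walking once around `v`, another `n - 2` rotations turn the
star into a path through the remaining `n - 1` points in angular order plus one spoke at `v`.

Once the spoke stands at an end of a rim edge, two rotations make the labels of the spoke and of
that rim edge trade places, and moving the spoke there takes one more. Hence any label can be
brought to any rim edge in `6` rotations, and two labelings of the spoked path are at most
`6 (n - 2)` rotations apart, up to one final move of the spoke. Altogether this gives
`2 (n - 2) + 7 (n - 2) + 2 (n - 2)` rotations.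
-/

/-! ### Bounded reachability -/

namespace ReachesIn

variable {α : Type*} {step : α → α → Prop} {k m : ℕ} {x y z : α}

theorem refl (m : ℕ) (x : α) : ReachesIn step m x x :=
  ⟨0, m.zero_le, fun _ => x, rfl, rfl, by simp⟩

theorem mono (hkm : k ≤ m) (h : ReachesIn step k x y) : ReachesIn step m x y :=
  let ⟨i, hi, hf⟩ := h
  ⟨i, hi.trans hkm, hf⟩

theorem head (hxy : step x y) (hyz : ReachesIn step m y z) : ReachesIn step (m + 1) x z := by
  obtain ⟨i, hi, f, hf0, hfi, hf⟩ := hyz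
  refine ⟨i + 1, by omega, fun | 0 => x | t + 1 => f t, rfl, hfi, ?_⟩
  rintro (_ | t) ht
  · simpa only [hf0] using hxy
  · exact hf t (by omega)

theorem single (h : step x y) : ReachesIn step 1 x y :=
  head h (refl 0 y)

theorem trans (hxy : ReachesIn step k x y) (hyz : ReachesIn step m y z) :
    ReachesIn step (k + m) x z := by
  obtain ⟨i, hi, f, rfl, rfl, hf⟩ := hxy
  suffices ReachesIn step (i + m) (f 0) z from this.mono (by omega)
  clear hi
  induction i generalizing f with
  | zero => simpa only [zero_add] using hyz
  | succ i ih =>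
    have tail := ih (fun t => f (t + 1)) (fun t ht => hf (t + 1) (by omega)) hyz
    exact (head (hf 0 i.succ_pos) tail).mono (by omega)

theorem symm (hstep : ∀ x y, step x y → step y x) (h : ReachesIn step m x y) :
    ReachesIn step m y x := by
  obtain ⟨i, hi, f, rfl, rfl, hf⟩ := h
  refine ⟨i, hi, fun t => f (i - t), by simp, by simp, fun t ht => hstep _ _ ?_⟩
  simpa only [show i - (t + 1) + 1 = i - t by omega] using hf (i - (t + 1)) (by omega)

end ReachesIn

/-! ### Noncrossing segments -/

/-- `e` is admissible as an edge of a tree on `S`: it joins two distinct points of `S`. -/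
def IsEdgeOn (S : Finset Pt) (e : Sym2 Pt) : Prop :=
  ¬ e.IsDiag ∧ ∀ p ∈ e, p ∈ S

theorem isEdgeOn_mk {S : Finset Pt} {a b : Pt} :
    IsEdgeOn S s(a, b) ↔ a ≠ b ∧ a ∈ S ∧ b ∈ S := by
  simp [IsEdgeOn]

theorem noCrossPair_mk {a b c d : Pt} :
    NoCrossPair s(a, b) s(c, d) ↔
      ∀ x ∈ segment ℝ a b, x ∈ segment ℝ c d → (x = a ∨ x = b) ∧ (x = c ∨ x = d) := by
  simp [NoCrossPair, Set.subset_def, segOf, epts]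

theorem NoCrossPair.symm {e f : Sym2 Pt} (h : NoCrossPair e f) : NoCrossPair f e := by
  rwa [NoCrossPair, Set.inter_comm, Set.inter_comm (epts f)]

theorem image_fst_segment {a b : Pt} (hab : a.1 ≤ b.1) :
    Prod.fst '' segment ℝ a b = Set.Icc a.1 b.1 := by
  rw [← segment_eq_Icc hab]
  exact image_segment ℝ (LinearMap.fst ℝ ℝ ℝ).toAffineMap a b

theorem fst_mem_Icc_of_mem_segment {a b x : Pt} (hab : a.1 ≤ b.1) (hx : x ∈ segment ℝ a b) :
    x.1 ∈ Set.Icc a.1 b.1 :=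
  image_fst_segment hab ▸ Set.mem_image_of_mem _ hx

theorem exists_mem_segment_fst_eq {a b : Pt} {t : ℝ} (hat : a.1 ≤ t) (htb : t ≤ b.1) :
    ∃ x ∈ segment ℝ a b, x.1 = t :=
  (image_fst_segment (hat.trans htb)).ge ⟨hat, htb⟩

theorem snd_eq_of_mem_segment {a b x : Pt} (hab : a.1 ≠ b.1) (hx : x ∈ segment ℝ a b) :
    x.2 = a.2 + (b.2 - a.2) / (b.1 - a.1) * (x.1 - a.1) := by
  obtain ⟨r, s, -, -, hrs, rfl⟩ := hx
  obtain rfl : r = 1 - s := by linarith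
  have hne : b.1 - a.1 ≠ 0 := sub_ne_zero.2 hab.symm
  simp only [Prod.fst_add, Prod.snd_add, Prod.smul_fst, Prod.smul_snd, smul_eq_mul]
  field_simp
  ring

theorem injOn_fst_segment {a b : Pt} (hab : a.1 ≠ b.1) : Set.InjOn Prod.fst (segment ℝ a b) := by
  intro x hx y hy hxy
  refine Prod.ext hxy ?_
  rw [snd_eq_of_mem_segment hab hx, snd_eq_of_mem_segment hab hy, hxy]

theorem noCrossPair_of_fst_le {a b c d : Pt} (hab : a.1 < b.1) (hbc : b.1 ≤ c.1) (hcd : c.1 < d.1)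
    (heq : b.1 = c.1 → b = c) : NoCrossPair s(a, b) s(c, d) := by
  refine noCrossPair_mk.2 fun x hxab hxcd => ?_
  have hxb := (fst_mem_Icc_of_mem_segment hab.le hxab).2
  have hcx := (fst_mem_Icc_of_mem_segment hcd.le hxcd).1
  obtain rfl : b = c := heq (by linarith)
  obtain rfl : x = b :=
    injOn_fst_segment hab.ne hxab (right_mem_segment ℝ a b) (le_antisymm hxb hcx)
  simp

theorem exists_mem_inter_of_vertical_order_swap {s t : Set Pt} (hs : Convex ℝ s) (ht : Convex ℝ t)
    {x₁ x₂ y₁ y₂ : Pt} (hx₁ : x₁ ∈ s) (hx₂ : x₂ ∈ s) (hy₁ : y₁ ∈ t) (hy₂ : y₂ ∈ t)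
    (h₁ : x₁.1 = y₁.1) (h₂ : x₂.1 = y₂.1) (hlt : x₁.1 < x₂.1)
    (hle : x₁.2 ≤ y₁.2) (hgt : y₂.2 < x₂.2) : ∃ w ∈ s ∩ t, w.1 < x₂.1 := by
  obtain ⟨D, hD⟩ : ∃ D, D = (y₁.2 - x₁.2) + (x₂.2 - y₂.2) := ⟨_, rfl⟩
  have hDpos : 0 < D := by linarith
  have hr : 0 ≤ (y₁.2 - x₁.2) / D := div_nonneg (by linarith) hDpos.le
  have hs' : 0 < (x₂.2 - y₂.2) / D := div_pos (by linarith) hDpos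
  have hsum : (x₂.2 - y₂.2) / D + (y₁.2 - x₁.2) / D = 1 := by rw [hD] at hDpos ⊢; field_simp; ring
  refine ⟨_, ⟨hs hx₁ hx₂ hs'.le hr hsum, ?_⟩, ?_⟩
  · convert ht hy₁ hy₂ hs'.le hr hsum using 1
    refine Prod.ext ?_ ?_
    · simp [h₁, h₂]
    · simp only [Prod.snd_add, Prod.smul_snd, smul_eq_mul]
      ring
  · calc (x₂.2 - y₂.2) / D * x₁.1 + (y₁.2 - x₁.2) / D * x₂.1
        < (x₂.2 - y₂.2) / D * x₂.1 + (y₁.2 - x₁.2) / D * x₂.1 := by gcongr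
      _ = x₂.1 := by rw [← add_mul, hsum, one_mul]

theorem NoCrossPair.left_eq_of_vertical_order_swap {a b c d : Pt}
    (hnc : NoCrossPair s(a, b) s(c, d)) (hab : a.1 ≤ b.1) (hcd : c.1 ≤ d.1) {x₁ x₂ y₁ y₂ : Pt}
    (hx₁ : x₁ ∈ segment ℝ a b) (hx₂ : x₂ ∈ segment ℝ a b)
    (hy₁ : y₁ ∈ segment ℝ c d) (hy₂ : y₂ ∈ segment ℝ c d)
    (h₁ : x₁.1 = y₁.1) (h₂ : x₂.1 = y₂.1) (hlt : x₁.1 < x₂.1)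
    (hle : x₁.2 ≤ y₁.2) (hgt : y₂.2 < x₂.2) : a = c := by
  obtain ⟨w, ⟨hwab, hwcd⟩, hw⟩ := exists_mem_inter_of_vertical_order_swap
    (convex_segment a b) (convex_segment c d) hx₁ hx₂ hy₁ hy₂ h₁ h₂ hlt hle hgt
  have hwb : w ≠ b := by
    rintro rfl
    exact hw.not_ge (fst_mem_Icc_of_mem_segment hab hx₂).2
  have hwd : w ≠ d := by
    rintro rfl
    exact (h₂ ▸ hw).not_ge (fst_mem_Icc_of_mem_segment hcd hy₂).2
  obtain ⟨hwa, hwc⟩ := noCrossPair_mk.1 hnc w hwab hwcd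
  exact (hwa.resolve_right hwb).symm.trans (hwc.resolve_right hwd)

/-! ### Edges visible from above -/

/-- Some point of `s` lies vertically below some point of `t`. -/
def SomewhereBelow (s t : Set Pt) : Prop :=
  ∃ x ∈ s, ∃ y ∈ t, x.1 = y.1 ∧ x.2 < y.2

/-- No edge of `E` meets the open vertical ray going up from `p`. -/
def VisibleFromAbove (E : Finset (Sym2 Pt)) (p : Pt) : Prop :=
  ∀ f ∈ E, ¬ SomewhereBelow {p} (segOf f)

/-- `s(a, b)` is the steepest among the edges of `E` leaving `a` to the right. -/
structure IsSteepest (E : Finset (Sym2 Pt)) (a b : Pt) : Prop where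
  mem : s(a, b) ∈ E
  lt : a.1 < b.1
  slope_le : ∀ d, s(a, d) ∈ E → a.1 < d.1 →
    (d.2 - a.2) / (d.1 - a.1) ≤ (b.2 - a.2) / (b.1 - a.1)

theorem IsSteepest.not_somewhereBelow {E : Finset (Sym2 Pt)} {a b d : Pt} (h : IsSteepest E a b)
    (had : s(a, d) ∈ E) (hlt : a.1 < d.1) :
    ¬ SomewhereBelow (segment ℝ a b) (segment ℝ a d) := by
  rintro ⟨y, hy, x, hx, hyx, hlt'⟩
  have hax := (fst_mem_Icc_of_mem_segment hlt.le hx).1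
  rw [snd_eq_of_mem_segment hlt.ne hx, snd_eq_of_mem_segment h.lt.ne hy, hyx] at hlt'
  have := mul_le_mul_of_nonneg_right (h.slope_le d had hlt) (sub_nonneg.2 hax)
  linarith

theorem exists_isSteepest {E : Finset (Sym2 Pt)} {a b : Pt} (hab : s(a, b) ∈ E) (hlt : a.1 < b.1) :
    ∃ c, IsSteepest E a c := by
  have hfin : {c | s(a, c) ∈ E ∧ a.1 < c.1}.Finite :=
    (E.finite_toSet.preimage (Sym2.mkEmbedding a).injective.injOn).subset fun c hc => hc.1
  obtain ⟨c, ⟨hmem, hac⟩, hmax⟩ := Set.exists_max_image _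
    (fun c : Pt => (c.2 - a.2) / (c.1 - a.1)) hfin ⟨b, hab, hlt⟩
  exact ⟨c, hmem, hac, fun d had hlt => hmax d ⟨had, hlt⟩⟩

/- Noncrossing edges keep their vertical order over a common interval, so an edge passing above
`ab` cannot begin to the left of the visible point `a`, nor begin below `ab`. -/
theorem IsSteepest.left_of_somewhereBelow {E : Finset (Sym2 Pt)} (hnc : NoCross E) {a b c d : Pt}
    (hab : IsSteepest E a b) (ha : VisibleFromAbove E a) (hcd : s(c, d) ∈ E) (hlt : c.1 < d.1)
    (hinj : c.1 = a.1 → c = a) (h : SomewhereBelow (segment ℝ a b) (segment ℝ c d)) :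
    a.1 < c.1 ∧ SomewhereBelow (segment ℝ a b) {c} := by
  have hca : c ≠ a := by
    rintro rfl
    exact hab.not_somewhereBelow hcd hlt h
  obtain ⟨y, hy, x, hx, hyx, hbelow⟩ := h
  have hcross : NoCrossPair s(c, d) s(a, b) := by
    refine hnc _ hcd _ hab.mem fun heq => ?_
    obtain ⟨rfl, -⟩ | ⟨rfl, rfl⟩ := Sym2.eq_iff.1 heq
    exacts [hca rfl, hlt.not_gt hab.lt]
  have hyb := fst_mem_Icc_of_mem_segment hab.lt.le hy
  have hxd := fst_mem_Icc_of_mem_segment hlt.le hx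
  rcases lt_or_ge a.1 c.1 with hac | hac
  · obtain ⟨z, hz, hzc⟩ := exists_mem_segment_fst_eq hac.le ((hyx ▸ hxd.1).trans hyb.2)
    refine ⟨hac, z, hz, c, rfl, hzc, ?_⟩
    by_contra! hcz
    have hcx : c.1 < x.1 := by
      refine hxd.1.lt_of_ne fun hcx => ?_
      obtain rfl := injOn_fst_segment hlt.ne (left_mem_segment ℝ c d) hx hcx
      obtain rfl := injOn_fst_segment hab.lt.ne hz hy (hzc.trans hyx.symm)
      exact hcz.not_gt hbelow
    exact hca (hcross.left_eq_of_vertical_order_swap hlt.le hab.lt.le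
      (left_mem_segment ℝ c d) hx hz hy hzc.symm hyx.symm hcx hcz hbelow)
  · obtain ⟨w, hw, hwa⟩ := exists_mem_segment_fst_eq hac ((hyx ▸ hyb.1).trans hxd.2)
    have hle : w.2 ≤ a.2 :=
      not_lt.1 fun hlt' => ha _ hcd ⟨a, rfl, w, hw, hwa.symm, hlt'⟩
    have hax : a.1 < x.1 := by
      refine hyx ▸ hyb.1.lt_of_ne fun hay => ?_
      obtain rfl := injOn_fst_segment hab.lt.ne (left_mem_segment ℝ a b) hy hay
      exact ha _ hcd ⟨a, rfl, x, hx, hyx, hbelow⟩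
    exact absurd (hcross.left_eq_of_vertical_order_swap hlt.le hab.lt.le
      hw hx (left_mem_segment ℝ a b) hy hwa hyx.symm (hwa ▸ hax) hle hbelow) hca

/-- `a` is the left endpoint of an edge of `E`. -/
def IsLeftEnd (E : Finset (Sym2 Pt)) (a : Pt) : Prop :=
  ∃ b, s(a, b) ∈ E ∧ a.1 < b.1

section Visibility

variable {P : Finset Pt} {E : Finset (Sym2 Pt)}

theorem IsEdgeOn.exists_fst_lt {e : Sym2 Pt} (hP : Set.InjOn Prod.fst (P : Set Pt))
    (he : IsEdgeOn P e) : ∃ a b, e = s(a, b) ∧ a.1 < b.1 := by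
  induction e using Sym2.ind with
  | _ a b =>
    obtain ⟨hne, ha, hb⟩ := isEdgeOn_mk.1 he
    rcases lt_or_gt_of_ne (hP.ne ha hb hne) with h | h
    exacts [⟨a, b, rfl, h⟩, ⟨b, a, Sym2.eq_swap, h⟩]

theorem exists_leftEnd_lt_of_not_visibleFromAbove (hP : Set.InjOn Prod.fst (P : Set Pt))
    (hE : ∀ e ∈ E, IsEdgeOn P e) {p : Pt} (hp : p ∈ P) (h : ¬ VisibleFromAbove E p) :
    ∃ c d, s(c, d) ∈ E ∧ c.1 < p.1 ∧ c.1 < d.1 ∧ SomewhereBelow {p} (segment ℝ c d) := by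
  unfold VisibleFromAbove at h
  push Not at h
  obtain ⟨f, hf, hpf⟩ := h
  obtain ⟨c, d, rfl, hcd⟩ := (hE f hf).exists_fst_lt hP
  refine ⟨c, d, hf, ?_, hcd, hpf⟩
  obtain ⟨_, rfl, x, hx, hpx, hlt⟩ := hpf
  refine hpx ▸ (fst_mem_Icc_of_mem_segment hcd.le hx).1.lt_of_ne fun hcx => ?_
  obtain rfl := injOn_fst_segment hcd.ne (left_mem_segment ℝ c d) hx hcx
  exact hlt.ne (congrArg Prod.snd (hP hp (isEdgeOn_mk.1 (hE _ hf)).2.1 hpx))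

theorem exists_visible_leftEnd (hP : Set.InjOn Prod.fst (P : Set Pt))
    (hE : ∀ e ∈ E, IsEdgeOn P e) (hne : E.Nonempty) :
    ∃ a ∈ P, IsLeftEnd E a ∧ VisibleFromAbove E a := by
  obtain ⟨e, he⟩ := hne
  obtain ⟨x, y, rfl, hxy⟩ := (hE e he).exists_fst_lt hP
  obtain ⟨a, ha, hmin⟩ := (P.filter (IsLeftEnd E)).exists_min_image Prod.fst
    ⟨x, Finset.mem_filter.2 ⟨(isEdgeOn_mk.1 (hE _ he)).2.1, y, he, hxy⟩⟩
  obtain ⟨haP, haL⟩ := Finset.mem_filter.1 ha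
  refine ⟨a, haP, haL, by_contra fun hvis => ?_⟩
  obtain ⟨c, d, hcd, hca, hlt, -⟩ := exists_leftEnd_lt_of_not_visibleFromAbove hP hE haP hvis
  exact (hmin c (Finset.mem_filter.2 ⟨(isEdgeOn_mk.1 (hE _ hcd)).2.1, d, hcd, hlt⟩)).not_gt hca

theorem IsSteepest.visibleFromAbove_right (hP : Set.InjOn Prod.fst (P : Set Pt))
    (hE : ∀ e ∈ E, IsEdgeOn P e) (hnc : NoCross E) {a b : Pt} (hab : IsSteepest E a b)
    (ha : VisibleFromAbove E a)
    (hmax : ∀ c ∈ P, IsLeftEnd E c → VisibleFromAbove E c → c.1 ≤ a.1) :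
    VisibleFromAbove E b := by
  obtain ⟨-, haP, hbP⟩ := isEdgeOn_mk.1 (hE _ hab.mem)
  -- Descent: a left end above `ab` is hidden by maximality of `a`, and the edge hiding it
  -- starts at another left end above `ab`, further to the left.
  let above := P.filter fun c => IsLeftEnd E c ∧ a.1 < c.1 ∧ SomewhereBelow (segment ℝ a b) {c}
  have mem_above {c d : Pt} (hcd : s(c, d) ∈ E) (hlt : c.1 < d.1)
      (h : SomewhereBelow (segment ℝ a b) (segment ℝ c d)) : c ∈ above := by
    have hcP := (isEdgeOn_mk.1 (hE _ hcd)).2.1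
    exact Finset.mem_filter.2 ⟨hcP, ⟨d, hcd, hlt⟩,
      hab.left_of_somewhereBelow hnc ha hcd hlt (fun h => hP hcP haP h) h⟩
  by_contra hb
  obtain ⟨c, d, hcd, -, hlt, _, rfl, hbelow⟩ :=
    exists_leftEnd_lt_of_not_visibleFromAbove hP hE hbP hb
  obtain ⟨c, hc, hmin⟩ := above.exists_min_image Prod.fst
    ⟨c, mem_above hcd hlt ⟨_, right_mem_segment ℝ a _, hbelow⟩⟩
  obtain ⟨hcP, hcL, hac, z, hz, _, rfl, hzc, hzc'⟩ := Finset.mem_filter.1 hc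
  obtain ⟨c', d', hcd', hlt, hlt', _, rfl, x, hx, hcx, hcx'⟩ :=
    exists_leftEnd_lt_of_not_visibleFromAbove hP hE hcP fun hvis =>
      hac.not_ge (hmax _ hcP hcL hvis)
  exact hlt.not_ge (hmin c' (mem_above hcd' hlt'
    ⟨z, hz, x, hx, hzc.trans hcx, hzc'.trans hcx'⟩))

theorem exists_edge_visibleFromAbove (hP : Set.InjOn Prod.fst (P : Set Pt))
    (hE : ∀ e ∈ E, IsEdgeOn P e) (hnc : NoCross E) (hne : E.Nonempty) :
    ∃ e ∈ E, ∀ p ∈ e, VisibleFromAbove E p := by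
  obtain ⟨a₀, ha₀P, ha₀⟩ := exists_visible_leftEnd hP hE hne
  obtain ⟨a, ha, hmax⟩ :=
    (P.filter fun a => IsLeftEnd E a ∧ VisibleFromAbove E a).exists_max_image Prod.fst
      ⟨a₀, Finset.mem_filter.2 ⟨ha₀P, ha₀⟩⟩
  obtain ⟨-, ⟨b₀, hab₀, hlt⟩, hvis⟩ := Finset.mem_filter.1 ha
  obtain ⟨b, hab⟩ := exists_isSteepest hab₀ hlt
  refine ⟨s(a, b), hab.mem, Sym2.ball.2 ⟨hvis, ?_⟩⟩
  exact hab.visibleFromAbove_right hP hE hnc hvis fun c hcP hcL hcV =>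
    hmax c (Finset.mem_filter.2 ⟨hcP, hcL, hcV⟩)

end Visibility

/-! ### The projective view from an extreme point -/

/-- The projective involution sending the origin to the point at infinity in vertical direction,
so that on the half-plane `0 < p.2` lines through the origin become vertical. -/
def perspective (p : Pt) : Pt := (p.1 / p.2, 1 / p.2)

theorem perspective_perspective {p : Pt} (hp : p.2 ≠ 0) : perspective (perspective p) = p := by
  refine Prod.ext ?_ ?_ <;> simp only [perspective] <;> field_simp

theorem convex_upperHalfPlane : Convex ℝ {p : Pt | 0 < p.2} :=
  convex_halfSpace_gt (LinearMap.snd ℝ ℝ ℝ).isLinear 0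

theorem perspective_mem_segment {a b x : Pt} (ha : 0 < a.2) (hb : 0 < b.2)
    (hx : x ∈ segment ℝ a b) : perspective x ∈ segment ℝ (perspective a) (perspective b) := by
  have hpos : 0 < x.2 := convex_upperHalfPlane.segment_subset ha hb hx
  obtain ⟨r, s, hr, hs, hrs, rfl⟩ := hx
  refine ⟨r * a.2 / (r • a + s • b).2, s * b.2 / (r • a + s • b).2, by positivity, by positivity,
    ?_, ?_⟩
  · rw [← add_div, div_eq_one_iff_eq hpos.ne']
    rfl
  · simp only [Prod.snd_add, Prod.smul_snd, smul_eq_mul] at hpos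
    refine Prod.ext ?_ ?_ <;>
      simp only [perspective, Prod.fst_add, Prod.snd_add, Prod.smul_fst, Prod.smul_snd,
        smul_eq_mul] <;>
      field_simp
    exact hrs

theorem image_perspective_segment {a b : Pt} (ha : 0 < a.2) (hb : 0 < b.2) :
    perspective '' segment ℝ a b = segment ℝ (perspective a) (perspective b) := by
  refine Set.Subset.antisymm (Set.image_subset_iff.2 fun x => perspective_mem_segment ha hb)
    fun y hy => ⟨perspective y, ?_, ?_⟩
  · simpa only [perspective_perspective ha.ne', perspective_perspective hb.ne'] using
      perspective_mem_segment (one_div_pos.2 ha) (one_div_pos.2 hb) hy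
  · exact perspective_perspective
      (convex_upperHalfPlane.segment_subset (one_div_pos.2 ha) (one_div_pos.2 hb) hy).ne'

/-- The affine coordinates `A` put `v` at the origin and the rest of `S` in the open upper
half-plane. -/
structure IsViewpoint (S : Finset Pt) (v : Pt) (A : Pt →ᵃ[ℝ] Pt) : Prop where
  mem : v ∈ S
  injective : Function.Injective A
  map_eq_zero : A v = 0
  snd_pos : ∀ p ∈ S.erase v, 0 < (A p).2

/-- Rotation by a right angle followed by scaling by `|n|`; it maps `-n` to the positive vertical
axis. -/
def turnMap (n : Pt) : Pt →ₗ[ℝ] Pt where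
  toFun w := (n.1 * w.2 - n.2 * w.1, -(n.1 * w.1 + n.2 * w.2))
  map_add' w z := by ext <;> simp <;> ring
  map_smul' c w := by ext <;> simp <;> ring

theorem turnMap_injective {n : Pt} (hn : n ≠ 0) : Function.Injective (turnMap n) := by
  refine (injective_iff_map_eq_zero _).2 fun w hw => ?_
  obtain ⟨h₁, h₂⟩ := Prod.ext_iff.1 hw
  simp only [turnMap, LinearMap.coe_mk, AddHom.coe_mk, Prod.fst_zero, Prod.snd_zero] at h₁ h₂
  have hnorm : n.1 ^ 2 + n.2 ^ 2 ≠ 0 := by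
    contrapose! hn
    refine Prod.ext (pow_eq_zero_iff two_ne_zero |>.1 ?_) (pow_eq_zero_iff two_ne_zero |>.1 ?_) <;>
      nlinarith [sq_nonneg n.1, sq_nonneg n.2]
  refine Prod.ext (mul_left_cancel₀ hnorm ?_) (mul_left_cancel₀ hnorm ?_)
  · simp only [Prod.fst_zero]
    linear_combination -n.2 * h₁ - n.1 * h₂
  · simp only [Prod.snd_zero]
    linear_combination n.1 * h₁ - n.2 * h₂

theorem exists_isViewpoint {S : Finset Pt} (hS : S.Nonempty) : ∃ v A, IsViewpoint S v A := by
  obtain ⟨o, ho⟩ := Infinite.exists_notMem_finset S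
  obtain ⟨v, hv, hmax⟩ := S.exists_max_image (fun p => (p.1 - o.1) ^ 2 + (p.2 - o.2) ^ 2) hS
  have hn : v - o ≠ 0 := sub_ne_zero.2 fun h => ho (h ▸ hv)
  refine ⟨v, (turnMap (v - o)).toAffineMap - AffineMap.const ℝ Pt (turnMap (v - o) v), hv,
    fun p q hpq => turnMap_injective hn (sub_left_injective hpq), by simp, fun p hp => ?_⟩
  obtain ⟨hpv, hpS⟩ := Finset.mem_erase.1 hp
  have hfar := hmax p hpS
  have hdist : 0 < (p.1 - v.1) ^ 2 + (p.2 - v.2) ^ 2 := by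
    contrapose! hpv
    refine Prod.ext ?_ ?_ <;> nlinarith [sq_nonneg (p.1 - v.1), sq_nonneg (p.2 - v.2)]
  simp only [turnMap, AffineMap.coe_sub, LinearMap.coe_toAffineMap, AffineMap.coe_const,
    Pi.sub_apply, Function.const_apply, LinearMap.coe_mk, AddHom.coe_mk, Prod.snd_sub,
    Prod.fst_sub]
  nlinarith

/-- The view of `p` in the coordinates `A`: segments ending at the origin of `A` become vertical
rays going up. -/
def view (A : Pt →ᵃ[ℝ] Pt) (p : Pt) : Pt := perspective (A p)

section View

variable {A : Pt →ᵃ[ℝ] Pt}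

theorem snd_pos_of_mem_segment {a b x : Pt} (ha : 0 < (A a).2) (hb : 0 < (A b).2)
    (hx : x ∈ segment ℝ a b) : 0 < (A x).2 :=
  (convex_upperHalfPlane.affine_preimage A).segment_subset ha hb hx

theorem image_view_segment {a b : Pt} (ha : 0 < (A a).2) (hb : 0 < (A b).2) :
    view A '' segment ℝ a b = segment ℝ (view A a) (view A b) := by
  rw [view, view, ← image_perspective_segment ha hb, ← image_segment ℝ A, Set.image_image]
  rfl

theorem injOn_view (hA : Function.Injective A) : Set.InjOn (view A) {p | 0 < (A p).2} := by
  intro p hp q hq hpq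
  have := congrArg perspective hpq
  rw [view, view, perspective_perspective hp.ne', perspective_perspective hq.ne'] at this
  exact hA this

theorem noCrossPair_view_iff (hA : Function.Injective A) {a b c d : Pt} (ha : 0 < (A a).2)
    (hb : 0 < (A b).2) (hc : 0 < (A c).2) (hd : 0 < (A d).2) :
    NoCrossPair s(view A a, view A b) s(view A c, view A d) ↔ NoCrossPair s(a, b) s(c, d) := by
  rw [noCrossPair_mk, noCrossPair_mk, ← image_view_segment ha hb, ← image_view_segment hc hd,
    Set.forall_mem_image]
  refine forall₂_congr fun x hx => ?_
  have hx : 0 < (A x).2 := snd_pos_of_mem_segment ha hb hx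
  have hinj := injOn_view hA
  rw [hinj.mem_image_iff (fun y => snd_pos_of_mem_segment hc hd) hx, hinj.eq_iff hx ha,
    hinj.eq_iff hx hb, hinj.eq_iff hx hc, hinj.eq_iff hx hd]

end View

theorem GenPos.eq_or_eq_of_mem_segment {S : Finset Pt} (hS : GenPos S) {u c d : Pt} (hu : u ∈ S)
    (hc : c ∈ S) (hd : d ∈ S) (hcd : c ≠ d) (h : u ∈ segment ℝ c d) : u = c ∨ u = d := by
  by_contra! hne
  exact hS c hc u hu d hd hne.1.symm hcd hne.2 (mem_segment_iff_wbtw.1 h).collinear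

namespace IsViewpoint

variable {S : Finset Pt} {v : Pt} {A : Pt →ᵃ[ℝ] Pt}

theorem map_lineMap (h : IsViewpoint S v A) (p : Pt) (c : ℝ) :
    A (AffineMap.lineMap v p c) = c • A p := by
  rw [AffineMap.apply_lineMap, h.map_eq_zero, AffineMap.lineMap_apply, vsub_eq_sub, sub_zero,
    vadd_eq_add, add_zero]

theorem injOn_fst_view (h : IsViewpoint S v A) (hS : GenPos S) :
    Set.InjOn (fun p => (view A p).1) (S.erase v : Set Pt) := by
  intro p hp q hq hpq
  by_contra hne
  have hp₂ := h.snd_pos p hp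
  have hq₂ := h.snd_pos q hq
  have hline : AffineMap.lineMap v p ((A q).2 / (A p).2) = q := by
    apply h.injective
    rw [h.map_lineMap]
    simp only [view, perspective] at hpq
    field_simp at hpq
    refine Prod.ext ?_ ?_ <;> simp only [Prod.smul_fst, Prod.smul_snd, smul_eq_mul] <;> field_simp
    linarith
  obtain ⟨hpv, hpS⟩ := Finset.mem_erase.1 hp
  obtain ⟨hqv, hqS⟩ := Finset.mem_erase.1 hq
  exact hS q hqS v h.mem p hpS hqv (Ne.symm hne) hpv.symm
    (collinear_insert_of_mem_affineSpan_pair (hline ▸ AffineMap.lineMap_mem_affineSpan_pair _ _ _))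

theorem view_of_mem_segment (h : IsViewpoint S v A) {b x : Pt} (hb : b ∈ S.erase v)
    (hx : x ∈ segment ℝ v b) (hxv : x ≠ v) :
    (view A x).1 = (view A b).1 ∧ (view A b).2 ≤ (view A x).2 := by
  rw [segment_eq_image_lineMap] at hx
  obtain ⟨c, ⟨hc₀, hc₁⟩, rfl⟩ := hx
  have hc : 0 < c := hc₀.lt_of_ne fun hc => hxv (by rw [← hc, AffineMap.lineMap_apply_zero])
  have hb₂ := h.snd_pos b hb
  rw [view, h.map_lineMap]
  simp only [view, perspective, Prod.smul_fst, Prod.smul_snd, smul_eq_mul]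
  refine ⟨by field_simp, one_div_le_one_div_of_le (by positivity) ?_⟩
  exact mul_le_of_le_one_left hb₂.le hc₁

theorem noCrossPair_spoke_spoke (h : IsViewpoint S v A) (hS : GenPos S) {b d : Pt}
    (hb : b ∈ S.erase v) (hd : d ∈ S.erase v) (hbd : b ≠ d) : NoCrossPair s(v, b) s(v, d) := by
  refine noCrossPair_mk.2 fun x hxb hxd => ?_
  suffices x = v from ⟨.inl this, .inl this⟩
  by_contra hxv
  exact hbd (h.injOn_fst_view hS hb hd
    ((h.view_of_mem_segment hb hxb hxv).1.symm.trans (h.view_of_mem_segment hd hxd hxv).1))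

theorem noCrossPair_spoke (h : IsViewpoint S v A) (hS : GenPos S) {u c d : Pt}
    (hu : u ∈ S.erase v) (hc : c ∈ S.erase v) (hd : d ∈ S.erase v) (hcd : c ≠ d)
    (hvis : ¬ SomewhereBelow {view A u} (segment ℝ (view A c) (view A d))) :
    NoCrossPair s(v, u) s(c, d) := by
  refine noCrossPair_mk.2 fun x hxu hxcd => ?_
  have hc₂ := h.snd_pos c hc
  have hd₂ := h.snd_pos d hd
  have hx₂ := snd_pos_of_mem_segment hc₂ hd₂ hxcd
  have hxv : x ≠ v := by
    rintro rfl
    simp [h.map_eq_zero] at hx₂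
  obtain ⟨hfst, hsnd⟩ := h.view_of_mem_segment hu hxu hxv
  have hxu : x = u := by
    refine injOn_view h.injective hx₂ (h.snd_pos u hu) (Prod.ext hfst (hsnd.antisymm' ?_))
    have hx : view A x ∈ segment ℝ (view A c) (view A d) :=
      image_view_segment hc₂ hd₂ ▸ Set.mem_image_of_mem _ hxcd
    exact not_lt.1 fun hlt => hvis ⟨_, rfl, _, hx, hfst.symm, hlt⟩
  subst hxu
  exact ⟨.inr rfl, hS.eq_or_eq_of_mem_segment (Finset.mem_of_mem_erase hu)
    (Finset.mem_of_mem_erase hc) (Finset.mem_of_mem_erase hd) hcd hxcd⟩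

end IsViewpoint

/-- The views of the edges of `E` that avoid the viewpoint `v`. -/
def viewEdges (A : Pt →ᵃ[ℝ] Pt) (v : Pt) (E : Finset (Sym2 Pt)) : Finset (Sym2 Pt) :=
  (E.filter (v ∉ ·)).image (Sym2.map (view A))

namespace IsViewpoint

variable {S : Finset Pt} {v : Pt} {A : Pt →ᵃ[ℝ] Pt} {E : Finset (Sym2 Pt)}

theorem injOn_fst_image_view (h : IsViewpoint S v A) (hS : GenPos S) :
    Set.InjOn Prod.fst (((S.erase v).image (view A) : Finset Pt) : Set Pt) := by
  rw [Finset.coe_image]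
  exact Set.InjOn.image_of_comp (h.injOn_fst_view hS)

theorem exists_of_mem_viewEdges (hE : ∀ e ∈ E, IsEdgeOn S e) {f : Sym2 Pt}
    (hf : f ∈ viewEdges A v E) : ∃ a ∈ S.erase v, ∃ b ∈ S.erase v,
      a ≠ b ∧ s(a, b) ∈ E ∧ f = s(view A a, view A b) := by
  obtain ⟨e, he, rfl⟩ := Finset.mem_image.1 hf
  obtain ⟨he, hve⟩ := Finset.mem_filter.1 he
  induction e using Sym2.ind with
  | _ a b =>
    obtain ⟨hne, ha, hb⟩ := isEdgeOn_mk.1 (hE _ he)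
    simp only [Sym2.mem_iff, not_or] at hve
    exact ⟨a, Finset.mem_erase.2 ⟨Ne.symm hve.1, ha⟩, b, Finset.mem_erase.2 ⟨Ne.symm hve.2, hb⟩,
      hne, he, rfl⟩

theorem isEdgeOn_of_mem_viewEdges (h : IsViewpoint S v A) (hE : ∀ e ∈ E, IsEdgeOn S e)
    {f : Sym2 Pt} (hf : f ∈ viewEdges A v E) : IsEdgeOn ((S.erase v).image (view A)) f := by
  obtain ⟨a, ha, b, hb, hne, -, rfl⟩ := exists_of_mem_viewEdges hE hf
  exact isEdgeOn_mk.2 ⟨(injOn_view h.injective).ne (h.snd_pos a ha) (h.snd_pos b hb) hne,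
    Finset.mem_image_of_mem _ ha, Finset.mem_image_of_mem _ hb⟩

theorem noCross_viewEdges (h : IsViewpoint S v A) (hE : ∀ e ∈ E, IsEdgeOn S e)
    (hnc : NoCross E) : NoCross (viewEdges A v E) := by
  intro f hf g hg hfg
  obtain ⟨a, ha, b, hb, -, hab, rfl⟩ := exists_of_mem_viewEdges hE hf
  obtain ⟨c, hc, d, hd, -, hcd, rfl⟩ := exists_of_mem_viewEdges hE hg
  refine (noCrossPair_view_iff h.injective (h.snd_pos a ha) (h.snd_pos b hb) (h.snd_pos c hc)
    (h.snd_pos d hd)).2 (hnc _ hab _ hcd fun heq => hfg ?_)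
  exact congrArg (Sym2.map (view A)) heq

theorem noCrossPair_spoke_of_visible (h : IsViewpoint S v A) (hS : GenPos S)
    (hE : ∀ e ∈ E, IsEdgeOn S e) {u : Pt} (hu : u ∈ S.erase v)
    (hvis : VisibleFromAbove (viewEdges A v E) (view A u)) {e : Sym2 Pt} (he : e ∈ E)
    (hne : e ≠ s(v, u)) : NoCrossPair s(v, u) e := by
  by_cases hve : v ∈ e
  · obtain ⟨w, rfl⟩ := hve
    obtain ⟨hvw, -, hw⟩ := isEdgeOn_mk.1 (hE _ he)
    exact h.noCrossPair_spoke_spoke hS hu (Finset.mem_erase.2 ⟨hvw.symm, hw⟩)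
      fun huw => hne (huw ▸ rfl)
  · have hview : Sym2.map (view A) e ∈ viewEdges A v E :=
      Finset.mem_image_of_mem _ (Finset.mem_filter.2 ⟨he, hve⟩)
    induction e using Sym2.ind with
    | _ c d =>
      obtain ⟨hcd, hc, hd⟩ := isEdgeOn_mk.1 (hE _ he)
      simp only [Sym2.mem_iff, not_or] at hve
      exact h.noCrossPair_spoke hS hu (Finset.mem_erase.2 ⟨Ne.symm hve.1, hc⟩)
        (Finset.mem_erase.2 ⟨Ne.symm hve.2, hd⟩) hcd (hvis _ hview)

theorem exists_edge_noCrossPair_spoke (h : IsViewpoint S v A) (hS : GenPos S)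
    (hE : ∀ e ∈ E, IsEdgeOn S e) (hnc : NoCross E) (hne : ∃ e ∈ E, v ∉ e) :
    ∃ a ∈ S.erase v, ∃ b ∈ S.erase v, s(a, b) ∈ E ∧
      ∀ u ∈ s(a, b), ∀ e ∈ E, e ≠ s(v, u) → NoCrossPair s(v, u) e := by
  obtain ⟨e, he, hve⟩ := hne
  obtain ⟨f, hf, hvis⟩ := exists_edge_visibleFromAbove (h.injOn_fst_image_view hS)
    (fun f => h.isEdgeOn_of_mem_viewEdges hE) (h.noCross_viewEdges hE hnc)
    ⟨_, Finset.mem_image_of_mem _ (Finset.mem_filter.2 ⟨he, hve⟩)⟩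
  obtain ⟨a, ha, b, hb, -, hab, rfl⟩ := exists_of_mem_viewEdges hE hf
  refine ⟨a, ha, b, hb, hab, Sym2.ball.2 ⟨fun e => ?_, fun e => ?_⟩⟩
  · exact h.noCrossPair_spoke_of_visible hS hE ha (hvis _ (Sym2.mem_mk_left _ _))
  · exact h.noCrossPair_spoke_of_visible hS hE hb (hvis _ (Sym2.mem_mk_right _ _))

end IsViewpoint

/-! ### Connectivity by a finite set of edges -/

/-- `p` and `q` are joined by a path with edges in `E`. -/
abbrev Conn {V : Type*} (E : Finset (Sym2 V)) (p q : V) : Prop :=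
  Relation.ReflTransGen (fun a b => s(a, b) ∈ E) p q

section Conn

variable {V : Type*} {E F : Finset (Sym2 V)} {a b p q u v : V}

theorem Conn.of_mem (h : s(a, b) ∈ E) : Conn E a b :=
  Relation.ReflTransGen.single h

theorem Conn.symm (h : Conn E p q) : Conn E q p :=
  have : Std.Symm fun a b => s(a, b) ∈ E := ⟨fun _ _ hab => Sym2.eq_swap ▸ hab⟩
  Relation.ReflTransGen.stdSymm.symm p q h

theorem Conn.mono (hEF : E ⊆ F) (h : Conn E p q) : Conn F p q :=
  Relation.ReflTransGen.mono (fun _ _ hab => hEF hab) p q h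

theorem Conn.exchange (h : Conn E p q) (hEF : ∀ e ∈ E, e ≠ s(a, b) → e ∈ F) (hab : Conn F a b) :
    Conn F p q := by
  induction h with
  | refl => exact .refl
  | @tail x y _ hxy ih =>
    refine ih.trans ?_
    by_cases heq : s(x, y) = s(a, b)
    · obtain ⟨rfl, rfl⟩ | ⟨rfl, rfl⟩ := Sym2.eq_iff.1 heq
      exacts [hab, hab.symm]
    · exact Conn.of_mem (hEF _ hxy heq)

theorem Conn.exists_last_edge [DecidableEq V] (h : Conn E v u) (hvu : v ≠ u) :
    ∃ w, s(w, u) ∈ E ∧ Conn (E.filter (u ∉ ·)) v w := by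
  suffices ∀ x, Conn E v x → (x ≠ u ∧ Conn (E.filter (u ∉ ·)) v x) ∨
      ∃ w, s(w, u) ∈ E ∧ Conn (E.filter (u ∉ ·)) v w from
    (this u h).resolve_left fun h => h.1 rfl
  intro x hx
  induction hx with
  | refl => exact .inl ⟨hvu, .refl⟩
  | @tail x y _ hxy ih =>
    refine ih.elim (fun ⟨hxu, hvx⟩ => ?_) .inr
    by_cases hyu : y = u
    · exact .inr ⟨x, hyu ▸ hxy, hvx⟩
    · refine .inl ⟨hyu, hvx.tail (Finset.mem_filter.2 ⟨hxy, ?_⟩)⟩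
      simp only [Sym2.mem_iff, not_or]
      exact ⟨Ne.symm hxu, Ne.symm hyu⟩

theorem card_le_card_add_one_of_conn {S : Finset V} (hS : S.Nonempty)
    (hE : ∀ e ∈ E, ∀ p ∈ e, p ∈ S) (hconn : ∀ p ∈ S, ∀ q ∈ S, Conn E p q) :
    S.card ≤ E.card + 1 := by
  let G : SimpleGraph S := (SimpleGraph.fromEdgeSet (E : Set (Sym2 V))).induce S
  have reachable {p q : V} (hp : p ∈ S) (h : Conn E p q) :
      ∃ hq : q ∈ S, G.Reachable ⟨p, hp⟩ ⟨q, hq⟩ := by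
    induction h with
    | refl => exact ⟨hp, .rfl⟩
    | @tail x y _ hxy ih =>
      obtain ⟨hx, hpx⟩ := ih
      have hy : y ∈ S := hE _ hxy y (Sym2.mem_mk_right x y)
      refine ⟨hy, hpx.trans ?_⟩
      by_cases heq : x = y
      · subst heq
        exact .rfl
      · exact SimpleGraph.Adj.reachable ((SimpleGraph.fromEdgeSet_adj _).2 ⟨hxy, heq⟩)
  have := hS.to_subtype
  have hG : G.Connected := ⟨fun p q => (reachable p.2 (hconn p p.2 q q.2)).2⟩
  have hcard : Nat.card G.edgeSet ≤ Nat.card E := by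
    let φ := (SimpleGraph.Embedding.induce (G := SimpleGraph.fromEdgeSet (E : Set (Sym2 V))) S)
    refine Nat.card_le_card_of_injective (fun e => ⟨φ.mapEdgeSet e, ?_⟩) fun e f hef => ?_
    · exact ((SimpleGraph.edgeSet_fromEdgeSet (E : Set (Sym2 V))).subset (φ.mapEdgeSet e).2).1
    · exact φ.mapEdgeSet.injective (Subtype.ext (Subtype.mk.inj hef))
  simpa using hG.card_vert_le_card_edgeSet_add_one.trans (Nat.add_le_add_right hcard 1)

end Conn

/-! ### Exchanging an edge of a tree -/

namespace IsPST

variable {S : Finset Pt} {E : Finset (Sym2 Pt)} {a b v : Pt}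

theorem isEdgeOn (h : IsPST S E) : ∀ e ∈ E, IsEdgeOn S e := h.1

theorem noCross (h : IsPST S E) : NoCross E := h.2.1

theorem conn (h : IsPST S E) {p q : Pt} (hp : p ∈ S) (hq : q ∈ S) : Conn E p q :=
  h.2.2.2 p hp q hq

theorem card_add_one (h : IsPST S E) : E.card + 1 = S.card := h.2.2.1

theorem notMem_of_triangle (h : IsPST S E) (hva : s(v, a) ∈ E) (hvb : s(v, b) ∈ E) :
    s(a, b) ∉ E := by
  intro hab
  obtain ⟨hva', hv, -⟩ := isEdgeOn_mk.1 (h.isEdgeOn _ hva)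
  have hvb' := (isEdgeOn_mk.1 (h.isEdgeOn _ hvb)).1
  have hpath : Conn (E.erase s(a, b)) a b := by
    have hva_mem : s(v, a) ∈ E.erase s(a, b) := Finset.mem_erase.2 ⟨by grind, hva⟩
    have hvb_mem : s(v, b) ∈ E.erase s(a, b) := Finset.mem_erase.2 ⟨by grind, hvb⟩
    exact (Conn.of_mem hva_mem).symm.trans (Conn.of_mem hvb_mem)
  have hcard := card_le_card_add_one_of_conn ⟨v, hv⟩
    (fun e he => (h.isEdgeOn e (Finset.mem_of_mem_erase he)).2)
    fun p hp q hq => (h.conn hp hq).exchange (fun e he hne => Finset.mem_erase.2 ⟨hne, he⟩) hpath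
  have := Finset.card_erase_add_one hab
  have := h.card_add_one
  omega

theorem exchange (h : IsPST S E) {g : Sym2 Pt} (hab : s(a, b) ∈ E) (hg : g ∉ E)
    (hgS : IsEdgeOn S g) (hnc : ∀ f ∈ E, NoCrossPair g f)
    (hconn : Conn (insert g (E.erase s(a, b))) a b) : IsPST S (insert g (E.erase s(a, b))) := by
  have erase_subset : ∀ f ∈ E.erase s(a, b), f ∈ E := fun f => Finset.mem_of_mem_erase
  refine ⟨?_, ?_, ?_, fun p hp q hq => (h.conn hp hq).exchange (fun e he hne => ?_) hconn⟩
  · exact (Finset.forall_mem_insert _ _ _).2 ⟨hgS, fun f hf => h.isEdgeOn f (erase_subset f hf)⟩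
  · intro e he f hf hef
    rw [Finset.mem_insert] at he hf
    rcases he with rfl | he <;> rcases hf with rfl | hf
    · exact absurd rfl hef
    · exact hnc f (erase_subset f hf)
    · exact (hnc e (erase_subset e he)).symm
    · exact h.noCross e (erase_subset e he) f (erase_subset f hf) hef
  · rw [Finset.card_insert_of_notMem fun h => hg (erase_subset g h),
      Finset.card_erase_add_one hab, h.card_add_one]
  · exact Finset.mem_insert_of_mem (Finset.mem_erase.2 ⟨hne, he⟩)

end IsPST

/-- The labeled tree obtained from `T` by replacing the edge `e` by `g`, which inherits its
label. -/
def moveEdge (T : LTree) (e g : Sym2 Pt) : LTree :=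
  (insert g (T.1.erase e), T.2 ∘ Equiv.swap e g)

theorem moveEdge_snd_new (T : LTree) (e g : Sym2 Pt) : (moveEdge T e g).2 g = T.2 e := by
  simp [moveEdge]

theorem moveEdge_snd_of_ne {T : LTree} {e f g : Sym2 Pt} (hfe : f ≠ e) (hfg : f ≠ g) :
    (moveEdge T e g).2 f = T.2 f :=
  congrArg T.2 (Equiv.swap_apply_of_ne_of_ne hfe hfg)

section Labeled

variable {S : Finset Pt} {T T' : LTree} {g : Sym2 Pt}

theorem IsLabeledPST.isLabeledPST_moveEdge {e : Sym2 Pt} (hT : IsLabeledPST S T) (he : e ∈ T.1)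
    (hg : g ∉ T.1) (hPST : IsPST S (insert g (T.1.erase e))) : IsLabeledPST S (moveEdge T e g) := by
  obtain ⟨-, hbij, hzero⟩ := hT
  refine ⟨hPST, hbij.comp ?_, fun f hf => ?_⟩
  · rw [moveEdge, Finset.coe_insert, Finset.coe_erase, ← Equiv.bijOn_symm, Equiv.symm_swap]
    exact Equiv.swap_bijOn_exchange he hg
  · simp only [moveEdge, Finset.mem_insert, Finset.mem_erase, not_or, not_and_or, not_not] at hf
    obtain ⟨hfg, hfe⟩ := hf
    rcases eq_or_ne f e with rfl | hne
    · exact (congrArg T.2 (Equiv.swap_apply_left f g)).trans (hzero g hg)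
    · rw [moveEdge_snd_of_ne hne hfg, hzero f (hfe.resolve_left hne)]

theorem LabRotation.symm (h : LabRotation S T T') : LabRotation S T' T := by
  obtain ⟨hT, hT', e, g, he, hg, ⟨p, hpe, hpg⟩, hnc, hlab, hkeep⟩ := h
  exact ⟨hT', hT, g, e, hg, he, ⟨p, hpg, hpe⟩, hnc.symm, hlab.symm,
    fun f hf => (hkeep f (Finset.inter_comm T.1 T'.1 ▸ hf)).symm⟩

theorem IsLabeledPST.labRotation_moveEdge (hT : IsLabeledPST S T) {a b : Pt}
    (hab : s(a, b) ∈ T.1) (hg : g ∉ T.1) (hgS : IsEdgeOn S g) (hshare : ∃ p ∈ s(a, b), p ∈ g)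
    (hnc : ∀ f ∈ T.1, NoCrossPair g f) (hconn : Conn (insert g (T.1.erase s(a, b))) a b) :
    LabRotation S T (moveEdge T s(a, b) g) := by
  have hne : s(a, b) ≠ g := fun h => hg (h ▸ hab)
  have hsdiff : T.1 \ (moveEdge T s(a, b) g).1 = {s(a, b)} := by grind [moveEdge]
  have hsdiff' : (moveEdge T s(a, b) g).1 \ T.1 = {g} := by grind [moveEdge]
  refine ⟨hT, hT.isLabeledPST_moveEdge hab hg (hT.1.exchange hab hg hgS hnc hconn), s(a, b), g,
    hsdiff, hsdiff', hshare, (hnc _ hab).symm, moveEdge_snd_new T _ g, fun f hf => ?_⟩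
  exact moveEdge_snd_of_ne (by grind [moveEdge]) (by grind [moveEdge])

end Labeled

/-! ### Rotating a tree to a star -/

section Star

variable {S : Finset Pt} {v : Pt} {T : LTree}

theorem mem_starAt_of_mem {e : Sym2 Pt} (he : IsEdgeOn S e) (hv : v ∈ e) : e ∈ starAt S v := by
  obtain ⟨w, rfl⟩ := hv
  obtain ⟨hvw, -, hw⟩ := isEdgeOn_mk.1 he
  exact Finset.mem_image_of_mem _ (Finset.mem_erase.2 ⟨hvw.symm, hw⟩)

theorem card_starAt_add_one_le (hv : v ∈ S) : (starAt S v).card + 1 ≤ S.card :=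
  (Nat.add_le_add_right Finset.card_image_le 1).trans_eq (Finset.card_erase_add_one hv)

theorem IsPST.eq_starAt {E : Finset (Sym2 Pt)} (hE : IsPST S E) (hv : v ∈ S)
    (h : ∀ e ∈ E, v ∈ e) : E = starAt S v :=
  Finset.eq_of_subset_of_card_le (fun e he => mem_starAt_of_mem (hE.isEdgeOn e he) (h e he))
    (Nat.le_of_add_le_add_right ((card_starAt_add_one_le hv).trans_eq hE.card_add_one.symm))

theorem IsPST.card_starAt_sdiff_le {E : Finset (Sym2 Pt)} (hE : IsPST S E) (hcard : 2 ≤ S.card)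
    (hv : v ∈ S) : (starAt S v \ E).card ≤ S.card - 2 := by
  obtain ⟨u, hu, huv⟩ := S.exists_mem_ne hcard v
  obtain ⟨w, hwv, -⟩ := (hE.conn hu hv).exists_last_edge huv
  have hstar : s(w, v) ∈ starAt S v :=
    mem_starAt_of_mem (hE.isEdgeOn _ hwv) (Sym2.mem_mk_right w v)
  have hlt : (starAt S v \ E).card < (starAt S v).card :=
    Finset.card_lt_card (Finset.ssubset_iff_subset_ne.2
      ⟨Finset.sdiff_subset, fun heq => (Finset.mem_sdiff.1 (heq ▸ hstar)).2 hwv⟩)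
  have := card_starAt_add_one_le hv
  omega

theorem IsViewpoint.exists_labRotation {A : Pt →ᵃ[ℝ] Pt} (h : IsViewpoint S v A) (hS : GenPos S)
    (hT : IsLabeledPST S T) (hne : ∃ e ∈ T.1, v ∉ e) :
    ∃ T', LabRotation S T T' ∧ starAt S v \ T'.1 ⊂ starAt S v \ T.1 := by
  obtain ⟨a, ha, b, hb, hab, hspoke⟩ :=
    h.exists_edge_noCrossPair_spoke hS hT.1.isEdgeOn hT.1.noCross hne
  obtain ⟨u, hu, huS, hvu⟩ : ∃ u ∈ s(a, b), u ∈ S.erase v ∧ s(v, u) ∉ T.1 := by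
    by_contra! hmem
    exact hT.1.notMem_of_triangle (hmem a (Sym2.mem_mk_left a b) ha)
      (hmem b (Sym2.mem_mk_right a b) hb) hab
  obtain ⟨huv, huS'⟩ := Finset.mem_erase.1 huS
  obtain ⟨w, hwu, hvw⟩ := (hT.1.conn h.mem huS').exists_last_edge huv.symm
  have hwv : w ≠ v := fun h => hvu (h ▸ hwu)
  have hconn : Conn (insert s(v, u) (T.1.erase s(w, u))) w u := by
    refine (hvw.mono fun e he => ?_).symm.trans (Conn.of_mem (Finset.mem_insert_self _ _))
    obtain ⟨he, hue⟩ := Finset.mem_filter.1 he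
    refine Finset.mem_insert_of_mem (Finset.mem_erase.2 ⟨?_, he⟩)
    rintro rfl
    exact hue (Sym2.mem_mk_right w u)
  refine ⟨moveEdge T s(w, u) s(v, u), hT.labRotation_moveEdge hwu hvu
    (isEdgeOn_mk.2 ⟨huv.symm, h.mem, huS'⟩) ⟨u, Sym2.mem_mk_right w u, Sym2.mem_mk_right v u⟩
    (fun f hf => hspoke u hu f hf fun hfu => hvu (hfu ▸ hf)) hconn, ?_⟩
  have hnotMem : s(w, u) ∉ starAt S v := by
    intro hstar
    obtain ⟨x, -, hx⟩ := Finset.mem_image.1 hstar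
    obtain ⟨rfl, -⟩ | ⟨rfl, -⟩ := Sym2.eq_iff.1 hx
    exacts [hwv rfl, huv rfl]
  refine Finset.ssubset_iff_subset_ne.2 ⟨?_, ?_⟩
  · grind [moveEdge]
  · intro heq
    have hmem : s(v, u) ∈ starAt S v \ T.1 :=
      Finset.mem_sdiff.2 ⟨Finset.mem_image_of_mem _ huS, hvu⟩
    exact (Finset.mem_sdiff.1 (heq ▸ hmem)).2 (Finset.mem_insert_self _ _)

theorem IsViewpoint.exists_reachesIn_starAt {A : Pt →ᵃ[ℝ] Pt} (h : IsViewpoint S v A)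
    (hS : GenPos S) (hT : IsLabeledPST S T) : ∃ T', IsLabeledPST S T' ∧ T'.1 = starAt S v ∧
      ReachesIn (LabRotation S) (starAt S v \ T.1).card T T' := by
  obtain ⟨n, hn⟩ : ∃ n, n = (starAt S v \ T.1).card := ⟨_, rfl⟩
  induction n using Nat.strong_induction_on generalizing T with
  | _ n ih =>
    by_cases hstar : ∀ e ∈ T.1, v ∈ e
    · exact ⟨T, hT, hT.1.eq_starAt h.mem hstar, .refl _ _⟩
    · push Not at hstar
      obtain ⟨T₁, hTT₁, hlt⟩ := h.exists_labRotation hS hT hstar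
      have hlt := Finset.card_lt_card hlt
      obtain ⟨T', hT', hstar', hreach⟩ := ih _ (hn ▸ hlt) hTT₁.2.1 rfl
      exact ⟨T', hT', hstar', (hreach.head hTT₁).mono hlt⟩

end Star

/-! ### The fan around an extreme point -/

theorem exists_bijOn_strictMonoOn {α β : Type*} [Nonempty α] [LinearOrder β] (s : Finset α)
    {f : α → β} (hf : Set.InjOn f s) : ∃ p : ℕ → α,
      Set.BijOn p (Set.Iio s.card) s ∧ StrictMonoOn (f ∘ p) (Set.Iio s.card) := by
  let rank (x : α) : ℕ := (s.filter (f · < f x)).card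
  have rank_le {x y : α} (hxy : f x ≤ f y) : rank x ≤ rank y :=
    Finset.card_le_card (Finset.monotone_filter_right s fun z _ hz => lt_of_lt_of_le hz hxy)
  have rank_lt {x y : α} (hx : x ∈ s) (hxy : f x < f y) : rank x < rank y :=
    Finset.card_lt_card (Finset.ssubset_iff_of_subset
      (Finset.monotone_filter_right s fun z _ hz => lt_trans hz hxy)
      |>.2 ⟨x, Finset.mem_filter.2 ⟨hx, hxy⟩, by simp⟩)
  have rank_injOn : Set.InjOn rank s := fun x hx y hy hxy => hf hx hy <|
    le_antisymm (not_lt.1 fun h => (rank_lt hy h).ne' hxy) (not_lt.1 fun h => (rank_lt hx h).ne hxy)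
  have rank_mapsTo : Set.MapsTo rank s (Finset.range s.card) := fun x hx =>
    Finset.mem_coe.2 <| Finset.mem_range.2 <| Finset.card_lt_card <|
      Finset.filter_ssubset.2 ⟨x, hx, lt_irrefl _⟩
  have hbij : Set.BijOn rank s (Finset.range s.card) := ⟨rank_mapsTo, rank_injOn,
    Finset.surjOn_of_injOn_of_card_le rank rank_mapsTo rank_injOn (by simp)⟩
  rw [Finset.coe_range] at hbij
  have hinv := hbij.invOn_invFunOn
  have hmaps := hbij.surjOn.mapsTo_invFunOn
  refine ⟨Function.invFunOn rank s, hinv.symm.bijOn hmaps hbij.mapsTo, fun i hi j hj hij => ?_⟩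
  by_contra! hle
  have := rank_le hle
  rw [hinv.2 hi, hinv.2 hj] at this
  exact hij.not_ge this

theorem not_somewhereBelow_segment_of_notMem_Ioo {u c d : Pt} (hcd : c.1 < d.1)
    (hu : u.1 ∉ Set.Ioo c.1 d.1) (huc : u.1 = c.1 → u = c) (hud : u.1 = d.1 → u = d) :
    ¬ SomewhereBelow {u} (segment ℝ c d) := by
  rintro ⟨u, rfl, x, hx, hux, hlt⟩
  obtain ⟨hcx, hxd⟩ := fst_mem_Icc_of_mem_segment hcd.le hx
  suffices u ∈ segment ℝ c d from hlt.ne (congrArg Prod.snd (injOn_fst_segment hcd.ne this hx hux))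
  rcases (hux ▸ hcx).eq_or_lt' with heq | hcu
  · exact huc heq ▸ left_mem_segment ℝ c d
  · have heq : u.1 = d.1 := (hux ▸ hxd).antisymm (not_lt.1 fun hud => hu ⟨hcu, hud⟩)
    exact hud heq ▸ right_mem_segment ℝ c d

/-- The edge joining the centre `v` to the `i`-th point of the sequence `p`. -/
def spoke (v : Pt) (p : ℕ → Pt) (i : ℕ) : Sym2 Pt := s(v, p i)

/-- The edge joining the `i`-th point of the sequence `p` to the next one. -/
def rim (p : ℕ → Pt) (i : ℕ) : Sym2 Pt := s(p i, p (i + 1))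

/-- The spokes and rim edges of the fan with centre `v` over the points `p 0, …, p (m - 1)`. -/
def fanEdges (v : Pt) (p : ℕ → Pt) (m : ℕ) : Finset (Sym2 Pt) :=
  (Finset.range m).image (spoke v p) ∪ (Finset.range (m - 1)).image (rim p)

theorem mem_fanEdges {v : Pt} {p : ℕ → Pt} {m : ℕ} {e : Sym2 Pt} :
    e ∈ fanEdges v p m ↔ (∃ i < m, e = spoke v p i) ∨ ∃ i, i + 1 < m ∧ e = rim p i := by
  simp [fanEdges, Nat.lt_sub_iff_add_lt, eq_comm]

/-- `p 0, …, p (m - 1)` enumerates the points of `S` other than `v` in such a way that the edges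
of the fan with centre `v` over this sequence do not cross. -/
structure IsFan (S : Finset Pt) (v : Pt) (p : ℕ → Pt) (m : ℕ) : Prop where
  mem : v ∈ S
  bijOn : Set.BijOn p (Set.Iio m) (S.erase v : Set Pt)
  noCross : NoCross (fanEdges v p m)

namespace IsViewpoint

variable {S : Finset Pt} {v : Pt} {A : Pt →ᵃ[ℝ] Pt} {p : ℕ → Pt} {m i j : ℕ}

theorem noCrossPair_rim_rim (h : IsViewpoint S v A)
    (hp : Set.MapsTo p (Set.Iio m) (S.erase v : Set Pt))
    (hmono : StrictMonoOn (fun i => (view A (p i)).1) (Set.Iio m)) (hij : i < j)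
    (hj : j + 1 < m) : NoCrossPair (rim p i) (rim p j) := by
  have snd_pos {k : ℕ} (hk : k < m) : 0 < (A (p k)).2 := h.snd_pos _ (hp hk)
  have hi : i + 1 < m := by omega
  refine (noCrossPair_view_iff h.injective (snd_pos (by omega)) (snd_pos hi) (snd_pos (by omega))
    (snd_pos hj)).1 (noCrossPair_of_fst_le (hmono (Nat.lt_of_succ_lt hi) hi i.lt_succ_self)
      (hmono.monotoneOn hi (Nat.lt_of_succ_lt hj) hij)
      (hmono (Nat.lt_of_succ_lt hj) hj j.lt_succ_self) fun heq => ?_)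
  rw [hmono.injOn hi (Nat.lt_of_succ_lt hj) heq]

theorem noCrossPair_spoke_rim (h : IsViewpoint S v A) (hS : GenPos S)
    (hp : Set.MapsTo p (Set.Iio m) (S.erase v : Set Pt))
    (hmono : StrictMonoOn (fun i => (view A (p i)).1) (Set.Iio m)) (hi : i < m)
    (hj : j + 1 < m) : NoCrossPair (spoke v p i) (rim p j) := by
  have hj' : j < m := Nat.lt_of_succ_lt hj
  have hlt : (view A (p j)).1 < (view A (p (j + 1))).1 := hmono hj' hj j.lt_succ_self
  refine h.noCrossPair_spoke hS (hp hi) (hp hj') (hp hj) (fun heq => hlt.ne (by rw [heq]))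
    (not_somewhereBelow_segment_of_notMem_Ioo hlt ?_ (fun heq => ?_) fun heq => ?_)
  · rintro ⟨hji, hij⟩
    exact absurd ((hmono.lt_iff_lt hi hj).1 hij) (not_lt.2 ((hmono.lt_iff_lt hj' hi).1 hji))
  · rw [hmono.injOn hi hj' heq]
  · rw [hmono.injOn hi hj heq]

theorem noCross_fanEdges (h : IsViewpoint S v A) (hS : GenPos S)
    (hp : Set.BijOn p (Set.Iio m) (S.erase v : Set Pt))
    (hmono : StrictMonoOn (fun i => (view A (p i)).1) (Set.Iio m)) :
    NoCross (fanEdges v p m) := by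
  intro e he f hf hef
  obtain ⟨i, hi, rfl⟩ | ⟨i, hi, rfl⟩ := mem_fanEdges.1 he <;>
    obtain ⟨j, hj, rfl⟩ | ⟨j, hj, rfl⟩ := mem_fanEdges.1 hf
  · exact h.noCrossPair_spoke_spoke hS (hp.mapsTo hi) (hp.mapsTo hj)
      (hp.injOn.ne hi hj fun hij => hef (hij ▸ rfl))
  · exact h.noCrossPair_spoke_rim hS hp.mapsTo hmono hi hj
  · exact (h.noCrossPair_spoke_rim hS hp.mapsTo hmono hj hi).symm
  · rcases lt_trichotomy i j with hij | rfl | hij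
    · exact h.noCrossPair_rim_rim hp.mapsTo hmono hij hj
    · exact absurd rfl hef
    · exact (h.noCrossPair_rim_rim hp.mapsTo hmono hij hi).symm

theorem exists_isFan (h : IsViewpoint S v A) (hS : GenPos S) :
    ∃ p, IsFan S v p (S.card - 1) := by
  obtain ⟨p, hp, hmono⟩ := exists_bijOn_strictMonoOn (S.erase v) (h.injOn_fst_view hS)
  rw [Finset.card_erase_of_mem h.mem] at hp hmono
  exact ⟨p, h.mem, hp, h.noCross_fanEdges hS hp hmono⟩

end IsViewpoint

namespace IsFan

variable {S : Finset Pt} {v : Pt} {p : ℕ → Pt} {m i j : ℕ} {T : LTree}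

theorem eq_of_apply_eq (h : IsFan S v p m) (hi : i < m) (hj : j < m) (hij : p i = p j) : i = j :=
  h.bijOn.injOn hi hj hij

theorem apply_ne (h : IsFan S v p m) (hi : i < m) : p i ≠ v :=
  (Finset.mem_erase.1 (h.bijOn.mapsTo hi)).1

theorem apply_mem (h : IsFan S v p m) (hi : i < m) : p i ∈ S :=
  Finset.mem_of_mem_erase (h.bijOn.mapsTo hi)

theorem spoke_inj (h : IsFan S v p m) (hi : i < m) (hj : j < m) :
    spoke v p i = spoke v p j ↔ i = j :=
  Sym2.congr_right.trans (h.bijOn.injOn.eq_iff hi hj)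

theorem rim_inj (h : IsFan S v p m) (hi : i + 1 < m) (hj : j + 1 < m) :
    rim p i = rim p j ↔ i = j := by
  refine ⟨fun hij => ?_, fun hij => hij ▸ rfl⟩
  obtain ⟨hij, -⟩ | ⟨hij, hji⟩ := Sym2.eq_iff.1 hij
  · exact h.eq_of_apply_eq (by omega) (by omega) hij
  · have := h.eq_of_apply_eq (by omega) hj hij
    have := h.eq_of_apply_eq hi (by omega) hji
    omega

theorem spoke_ne_rim (h : IsFan S v p m) (hj : j + 1 < m) : spoke v p i ≠ rim p j := by
  intro heq
  obtain ⟨hv, -⟩ | ⟨hv, -⟩ := Sym2.eq_iff.1 heq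
  exacts [h.apply_ne (by omega) hv.symm, h.apply_ne hj hv.symm]

theorem spoke_succ_ne (h : IsFan S v p m) (hi : i + 1 < m) : spoke v p (i + 1) ≠ spoke v p i :=
  fun heq => i.succ_ne_self ((h.spoke_inj hi (Nat.lt_of_succ_lt hi)).1 heq)

theorem spoke_notMem_image_rim (h : IsFan S v p m) :
    spoke v p i ∉ (Finset.range (m - 1)).image (rim p) := by
  simp only [Finset.mem_image, Finset.mem_range, not_exists, not_and]
  exact fun k hk => (h.spoke_ne_rim (by omega)).symm

theorem isEdgeOn_of_mem (h : IsFan S v p m) {e : Sym2 Pt} (he : e ∈ fanEdges v p m) :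
    IsEdgeOn S e := by
  obtain ⟨i, hi, rfl⟩ | ⟨i, hi, rfl⟩ := mem_fanEdges.1 he
  · exact isEdgeOn_mk.2 ⟨(h.apply_ne hi).symm, h.mem, h.apply_mem hi⟩
  · have hi' : i < m := Nat.lt_of_succ_lt hi
    exact isEdgeOn_mk.2 ⟨fun heq => i.lt_succ_self.ne (h.eq_of_apply_eq hi' hi heq),
      h.apply_mem hi', h.apply_mem hi⟩

theorem labRotation_moveEdge (h : IsFan S v p m) (hT : IsLabeledPST S T)
    (hsub : T.1 ⊆ fanEdges v p m) {a b : Pt} {g : Sym2 Pt} (hab : s(a, b) ∈ T.1)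
    (hg : g ∈ fanEdges v p m) (hgT : g ∉ T.1) (hshare : ∃ x ∈ s(a, b), x ∈ g)
    (hconn : Conn (insert g (T.1.erase s(a, b))) a b) :
    LabRotation S T (moveEdge T s(a, b) g) :=
  hT.labRotation_moveEdge hab hgT (h.isEdgeOn_of_mem hg) hshare
    (fun f hf => h.noCross g hg f (hsub hf) fun heq => hgT (heq ▸ hf)) hconn

end IsFan

/-! ### From the star to a path with one spoke -/

/-- The tree consisting of the first `k` rim edges of a fan and of its spokes from the `k`-th on. -/
def partialFan (v : Pt) (p : ℕ → Pt) (m k : ℕ) : Finset (Sym2 Pt) :=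
  (Finset.range k).image (rim p) ∪ (Finset.Ico k m).image (spoke v p)

theorem mem_partialFan {v : Pt} {p : ℕ → Pt} {m k : ℕ} {e : Sym2 Pt} :
    e ∈ partialFan v p m k ↔ (∃ i < k, e = rim p i) ∨ ∃ i, k ≤ i ∧ i < m ∧ e = spoke v p i := by
  simp [partialFan, and_assoc, eq_comm]

/-- The path formed by all rim edges of a fan, together with its `j`-th spoke. -/
def spokedPath (v : Pt) (p : ℕ → Pt) (m j : ℕ) : Finset (Sym2 Pt) :=
  insert (spoke v p j) ((Finset.range (m - 1)).image (rim p))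

theorem mem_spokedPath {v : Pt} {p : ℕ → Pt} {m j : ℕ} {e : Sym2 Pt} :
    e ∈ spokedPath v p m j ↔ e = spoke v p j ∨ ∃ i, i + 1 < m ∧ e = rim p i := by
  simp [spokedPath, Nat.lt_sub_iff_add_lt, eq_comm]

/-- `T` is a labeled tree whose edges are those of the path of rim edges and the `j`-th spoke. -/
structure IsLabeledSpokedPath (S : Finset Pt) (v : Pt) (p : ℕ → Pt) (m j : ℕ) (T : LTree) :
    Prop where
  isLabeledPST : IsLabeledPST S T
  lt : j < m
  fst_eq : T.1 = spokedPath v p m j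

namespace IsFan

variable {S : Finset Pt} {v : Pt} {p : ℕ → Pt} {m k : ℕ} {T : LTree}

theorem starAt_eq_partialFan (h : IsFan S v p m) : starAt S v = partialFan v p m 0 := by
  have himage : S.erase v = (Finset.range m).image p :=
    Finset.coe_injective (by rw [← h.bijOn.image_eq, Finset.coe_image, Finset.coe_range])
  rw [starAt, himage, Finset.image_image, partialFan, Finset.range_zero, Finset.image_empty,
    Finset.empty_union, ← Finset.range_eq_Ico]
  rfl

theorem exists_labRotation_partialFan (h : IsFan S v p m) (hk : k + 1 < m)
    (hT : IsLabeledPST S T) (hTk : T.1 = partialFan v p m k) :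
    ∃ T', LabRotation S T T' ∧ T'.1 = partialFan v p m (k + 1) := by
  have spoke_mem {i : ℕ} (hki : k ≤ i) (him : i < m) : spoke v p i ∈ T.1 :=
    hTk ▸ mem_partialFan.2 (.inr ⟨i, hki, him, rfl⟩)
  have hrim : rim p k ∉ T.1 := by
    rw [hTk, mem_partialFan]
    rintro (⟨i, hi, heq⟩ | ⟨i, -, -, heq⟩)
    · exact hi.ne' ((h.rim_inj hk (by omega)).1 heq)
    · exact h.spoke_ne_rim hk heq.symm
  have hsub : T.1 ⊆ fanEdges v p m := by
    intro e he
    obtain ⟨i, hi, rfl⟩ | ⟨i, -, hi, rfl⟩ := mem_partialFan.1 (hTk ▸ he)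
    · exact mem_fanEdges.2 (.inr ⟨i, by omega, rfl⟩)
    · exact mem_fanEdges.2 (.inl ⟨i, hi, rfl⟩)
  have hconn : Conn (insert (rim p k) (T.1.erase (spoke v p k))) v (p k) := by
    have hspoke : spoke v p (k + 1) ∈ T.1.erase (spoke v p k) :=
      Finset.mem_erase.2 ⟨h.spoke_succ_ne hk, spoke_mem k.le_succ hk⟩
    exact (Conn.of_mem (Finset.mem_insert_of_mem hspoke)).trans
      (Conn.of_mem (Finset.mem_insert_self (rim p k) _)).symm
  refine ⟨moveEdge T (spoke v p k) (rim p k), h.labRotation_moveEdge hT hsub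
    (spoke_mem le_rfl (by omega)) (mem_fanEdges.2 (.inr ⟨k, hk, rfl⟩)) hrim
    ⟨p k, Sym2.mem_mk_right _ _, Sym2.mem_mk_left _ _⟩ hconn, ?_⟩
  ext e
  have := @h.spoke_ne_rim
  have := @h.spoke_inj
  simp only [moveEdge, hTk, Finset.mem_insert, Finset.mem_erase, mem_partialFan]
  grind

theorem exists_reachesIn_partialFan (h : IsFan S v p m) (hk : k < m) (hT : IsLabeledPST S T)
    (hstar : T.1 = starAt S v) : ∃ T', IsLabeledPST S T' ∧ T'.1 = partialFan v p m k ∧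
      ReachesIn (LabRotation S) k T T' := by
  induction k with
  | zero => exact ⟨T, hT, hstar.trans h.starAt_eq_partialFan, .refl _ _⟩
  | succ k ih =>
    obtain ⟨T₁, hT₁, hT₁k, hreach⟩ := ih (by omega)
    obtain ⟨T₂, hrot, hT₂k⟩ := h.exists_labRotation_partialFan hk hT₁ hT₁k
    exact ⟨T₂, hrot.2.1, hT₂k, hreach.trans (.single hrot)⟩

theorem partialFan_last (hm : 0 < m) : partialFan v p m (m - 1) = spokedPath v p m (m - 1) := by
  rw [partialFan, Nat.Ico_pred_singleton hm, Finset.image_singleton, Finset.union_comm]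
  rfl

theorem exists_reachesIn_spokedPath (h : IsFan S v p m) (hm : 0 < m) (hT : IsLabeledPST S T)
    (hstar : T.1 = starAt S v) : ∃ T', IsLabeledSpokedPath S v p m (m - 1) T' ∧
      ReachesIn (LabRotation S) (m - 1) T T' := by
  obtain ⟨T', hT', hlast, hreach⟩ :=
    h.exists_reachesIn_partialFan (Nat.sub_one_lt_of_lt hm) hT hstar
  exact ⟨T', ⟨hT', by omega, hlast.trans (partialFan_last hm)⟩, hreach⟩

end IsFan

/-! ### Sorting the labels along the path -/

namespace IsLabeledSpokedPath

variable {S : Finset Pt} {v : Pt} {p : ℕ → Pt} {m i j : ℕ} {T : LTree}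

theorem spoke_mem (hT : IsLabeledSpokedPath S v p m j T) : spoke v p j ∈ T.1 :=
  hT.fst_eq ▸ mem_spokedPath.2 (.inl rfl)

theorem rim_mem (hT : IsLabeledSpokedPath S v p m j T) (hi : i + 1 < m) : rim p i ∈ T.1 :=
  hT.fst_eq ▸ mem_spokedPath.2 (.inr ⟨i, hi, rfl⟩)

theorem subset_fanEdges (hT : IsLabeledSpokedPath S v p m j T) : T.1 ⊆ fanEdges v p m := by
  intro e he
  obtain rfl | hrim := mem_spokedPath.1 (hT.fst_eq ▸ he)
  · exact mem_fanEdges.2 (.inl ⟨j, hT.lt, rfl⟩)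
  · exact mem_fanEdges.2 (.inr hrim)

theorem spoke_notMem (hT : IsLabeledSpokedPath S v p m j T) (h : IsFan S v p m) (hi : i < m)
    (hij : i ≠ j) : spoke v p i ∉ T.1 := by
  rw [hT.fst_eq, mem_spokedPath]
  rintro (heq | ⟨k, hk, heq⟩)
  exacts [hij ((h.spoke_inj hi hT.lt).1 heq), h.spoke_ne_rim hk heq]

end IsLabeledSpokedPath

theorem conn_of_rim_mem {E : Finset (Sym2 Pt)} {p : ℕ → Pt} {m : ℕ}
    (hE : ∀ i, i + 1 < m → rim p i ∈ E) {i j : ℕ} (hi : i < m) (hj : j < m) :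
    Conn E (p i) (p j) := by
  have conn_zero (k : ℕ) (hk : k < m) : Conn E (p 0) (p k) := by
    induction k with
    | zero => exact .refl
    | succ k ih => exact (ih (by omega)).trans (Conn.of_mem (hE k hk))
  exact (conn_zero i hi).symm.trans (conn_zero j hj)

namespace IsFan

variable {S : Finset Pt} {v : Pt} {p : ℕ → Pt} {m i j k : ℕ} {T T' : LTree}

theorem labRotation_spoke (h : IsFan S v p m) (hT : IsLabeledSpokedPath S v p m j T) (hi : i < m)
    (hij : i ≠ j) : LabRotation S T (moveEdge T (spoke v p j) (spoke v p i)) := by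
  refine h.labRotation_moveEdge hT.isLabeledPST hT.subset_fanEdges hT.spoke_mem
    (mem_fanEdges.2 (.inl ⟨i, hi, rfl⟩)) (hT.spoke_notMem h hi hij)
    ⟨v, Sym2.mem_mk_left _ _, Sym2.mem_mk_left _ _⟩ ?_
  refine (Conn.of_mem (Finset.mem_insert_self (spoke v p i) _)).trans
    (conn_of_rim_mem (fun k hk => ?_) hi hT.lt)
  exact Finset.mem_insert_of_mem (Finset.mem_erase.2 ⟨(h.spoke_ne_rim hk).symm, hT.rim_mem hk⟩)

theorem exists_shift (h : IsFan S v p m) (hT : IsLabeledSpokedPath S v p m j T) (hi : i < m) :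
    ∃ T', IsLabeledSpokedPath S v p m i T' ∧ T'.2 (spoke v p i) = T.2 (spoke v p j) ∧
      (∀ k, k + 1 < m → T'.2 (rim p k) = T.2 (rim p k)) ∧
      ReachesIn (LabRotation S) (min 1 (m - 1)) T T' := by
  rcases eq_or_ne i j with rfl | hij
  · exact ⟨T, hT, rfl, fun _ _ => rfl, .refl _ _⟩
  have hrot := h.labRotation_spoke hT hi hij
  have hlt := hT.lt
  refine ⟨_, ⟨hrot.2.1, hi, ?_⟩, moveEdge_snd_new _ _ _, fun k hk =>
    moveEdge_snd_of_ne (h.spoke_ne_rim hk).symm (h.spoke_ne_rim hk).symm,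
    (ReachesIn.single hrot).mono (by omega)⟩
  rw [moveEdge, hT.fst_eq, spokedPath, Finset.erase_insert h.spoke_notMem_image_rim,
    spokedPath]

theorem labRotation_rim (h : IsFan S v p m) (hT : IsLabeledSpokedPath S v p m i T)
    (hi : i + 1 < m) : LabRotation S T (moveEdge T (rim p i) (spoke v p (i + 1))) := by
  refine h.labRotation_moveEdge hT.isLabeledPST hT.subset_fanEdges (hT.rim_mem hi)
    (mem_fanEdges.2 (.inl ⟨i + 1, hi, rfl⟩)) (hT.spoke_notMem h hi i.succ_ne_self)
    ⟨p (i + 1), Sym2.mem_mk_right _ _, Sym2.mem_mk_right _ _⟩ ?_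
  have hspoke : spoke v p i ∈ insert (spoke v p (i + 1)) (T.1.erase (rim p i)) :=
    Finset.mem_insert_of_mem (Finset.mem_erase.2 ⟨h.spoke_ne_rim hi, hT.spoke_mem⟩)
  exact (Conn.of_mem hspoke).symm.trans
    (Conn.of_mem (Finset.mem_insert_self (spoke v p (i + 1)) _))

theorem labRotation_spoke_rim (h : IsFan S v p m) (hT : IsLabeledSpokedPath S v p m i T)
    (hi : i + 1 < m) (hT' : T' = moveEdge T (rim p i) (spoke v p (i + 1))) :
    LabRotation S T' (moveEdge T' (spoke v p i) (rim p i)) := by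
  have hne := h.spoke_succ_ne hi
  have hfst : T'.1 = insert (spoke v p (i + 1)) (T.1.erase (rim p i)) := congrArg Prod.fst hT'
  have hPST : IsLabeledPST S T' := hT' ▸ (h.labRotation_rim hT hi).2.1
  refine h.labRotation_moveEdge hPST ?_ ?_ (mem_fanEdges.2 (.inr ⟨i, hi, rfl⟩)) ?_
    ⟨p i, Sym2.mem_mk_right _ _, Sym2.mem_mk_left _ _⟩ ?_
  · rw [hfst]
    exact Finset.insert_subset (mem_fanEdges.2 (.inl ⟨i + 1, hi, rfl⟩))
      ((Finset.erase_subset _ _).trans hT.subset_fanEdges)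
  · rw [hfst]
    exact Finset.mem_insert_of_mem (Finset.mem_erase.2 ⟨h.spoke_ne_rim hi, hT.spoke_mem⟩)
  · simp [hfst, (h.spoke_ne_rim hi).symm]
  · have hspoke : spoke v p (i + 1) ∈ insert (rim p i) (T'.1.erase (spoke v p i)) :=
      Finset.mem_insert_of_mem (Finset.mem_erase.2 ⟨hne, hfst ▸ Finset.mem_insert_self _ _⟩)
    exact (Conn.of_mem hspoke).trans (Conn.of_mem (Finset.mem_insert_self (rim p i) _)).symm

theorem exists_swap_of_spoke (h : IsFan S v p m) (hT : IsLabeledSpokedPath S v p m i T)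
    (hi : i + 1 < m) : ∃ T', IsLabeledSpokedPath S v p m (i + 1) T' ∧
      T'.2 (spoke v p (i + 1)) = T.2 (rim p i) ∧ T'.2 (rim p i) = T.2 (spoke v p i) ∧
      (∀ k, k + 1 < m → k ≠ i → T'.2 (rim p k) = T.2 (rim p k)) ∧
      ReachesIn (LabRotation S) 2 T T' := by
  have hne := h.spoke_succ_ne hi
  have hsr {k l : ℕ} (hl : l + 1 < m) : spoke v p k ≠ rim p l := h.spoke_ne_rim hl
  have hrot₁ := h.labRotation_rim hT hi
  have hrot₂ := h.labRotation_spoke_rim hT hi rfl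
  refine ⟨_, ⟨hrot₂.2.1, hi, ?_⟩, ?_, ?_, fun k hk hki => ?_,
    (ReachesIn.single hrot₁).trans (.single hrot₂)⟩
  · have hspoke := h.spoke_notMem_image_rim (i := i)
    have hrim : rim p i ∈ (Finset.range (m - 1)).image (rim p) :=
      Finset.mem_image_of_mem _ (Finset.mem_range.2 (by omega))
    simp only [moveEdge, hT.fst_eq, spokedPath]
    grind
  · rw [moveEdge_snd_of_ne hne (hsr hi), moveEdge_snd_new]
  · rw [moveEdge_snd_new, moveEdge_snd_of_ne (hsr hi) hne.symm]
  · have hrim : rim p k ≠ rim p i := fun heq => hki ((h.rim_inj hk hi).1 heq)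
    rw [moveEdge_snd_of_ne (hsr hk).symm hrim, moveEdge_snd_of_ne hrim (hsr hk).symm]

theorem exists_swap (h : IsFan S v p m) (hT : IsLabeledSpokedPath S v p m j T)
    (hi : i + 1 < m) : ∃ T', IsLabeledSpokedPath S v p m (i + 1) T' ∧
      T'.2 (spoke v p (i + 1)) = T.2 (rim p i) ∧ T'.2 (rim p i) = T.2 (spoke v p j) ∧
      (∀ k, k + 1 < m → k ≠ i → T'.2 (rim p k) = T.2 (rim p k)) ∧
      ReachesIn (LabRotation S) 3 T T' := by
  obtain ⟨T₁, hT₁, hspoke₁, hrim₁, hreach₁⟩ := h.exists_shift hT (Nat.lt_of_succ_lt hi)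
  obtain ⟨T₂, hT₂, hspoke₂, hrim₂, hkeep₂, hreach₂⟩ := h.exists_swap_of_spoke hT₁ hi
  exact ⟨T₂, hT₂, hspoke₂.trans (hrim₁ i hi), hrim₂.trans hspoke₁,
    fun k hk hki => (hkeep₂ k hk hki).trans (hrim₁ k hk),
    (hreach₁.mono (min_le_left _ _)).trans hreach₂⟩

theorem exists_swap_swap (h : IsFan S v p m) (hT : IsLabeledSpokedPath S v p m j T)
    (hki : k < i) (hi : i + 1 < m) : ∃ T', IsLabeledSpokedPath S v p m (k + 1) T' ∧
      T'.2 (rim p k) = T.2 (rim p i) ∧ (∀ l < k, T'.2 (rim p l) = T.2 (rim p l)) ∧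
      ReachesIn (LabRotation S) 6 T T' := by
  obtain ⟨T₁, hT₁, hspoke₁, -, hkeep₁, hreach₁⟩ := h.exists_swap hT hi
  obtain ⟨T₂, hT₂, -, hrim₂, hkeep₂, hreach₂⟩ := h.exists_swap (i := k) hT₁ (by omega)
  exact ⟨T₂, hT₂, hrim₂.trans hspoke₁, fun l hl =>
    (hkeep₂ l (by omega) (by omega)).trans (hkeep₁ l (by omega) (by omega)), hreach₁.trans hreach₂⟩

theorem exists_extend_agreement (h : IsFan S v p m) (hT : IsLabeledSpokedPath S v p m i T)
    (hT' : IsLabeledSpokedPath S v p m j T') (hk : k + 1 < m)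
    (hagree : ∀ l < k, T.2 (rim p l) = T'.2 (rim p l)) :
    ∃ i₁ T₁, IsLabeledSpokedPath S v p m i₁ T₁ ∧
      (∀ l < k + 1, T₁.2 (rim p l) = T'.2 (rim p l)) ∧ ReachesIn (LabRotation S) 6 T T₁ := by
  suffices ∃ i₁ T₁, IsLabeledSpokedPath S v p m i₁ T₁ ∧ T₁.2 (rim p k) = T'.2 (rim p k) ∧
      (∀ l < k, T₁.2 (rim p l) = T.2 (rim p l)) ∧ ReachesIn (LabRotation S) 6 T T₁ by
    obtain ⟨i₁, T₁, hT₁, hrim, hkeep, hreach⟩ := this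
    refine ⟨i₁, T₁, hT₁, fun l hl => ?_, hreach⟩
    obtain hl | rfl := Nat.lt_succ_iff_lt_or_eq.1 hl
    exacts [(hkeep l hl).trans (hagree l hl), hrim]
  obtain ⟨-, hbij, -⟩ := hT.isLabeledPST
  obtain ⟨-, hbij', -⟩ := hT'.isLabeledPST
  obtain ⟨e, he, hlabel⟩ := hbij.surjOn (hbij'.mapsTo (hT'.rim_mem hk))
  obtain rfl | ⟨l, hl, rfl⟩ := mem_spokedPath.1 (hT.fst_eq ▸ he)
  · obtain ⟨T₁, hT₁, -, hrim, hkeep, hreach⟩ := h.exists_swap hT hk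
    exact ⟨_, T₁, hT₁, hrim.trans hlabel, fun l hl => hkeep l (by omega) hl.ne,
      hreach.mono (by omega)⟩
  · rcases lt_trichotomy l k with hlk | rfl | hkl
    · have heq := hbij'.injOn (hT'.rim_mem hl) (hT'.rim_mem hk) ((hagree l hlk).symm.trans hlabel)
      exact absurd ((h.rim_inj hl hk).1 heq) hlk.ne
    · exact ⟨i, T, hT, hlabel, fun _ _ => rfl, .refl _ _⟩
    · obtain ⟨T₁, hT₁, hrim, hkeep, hreach⟩ := h.exists_swap_swap hT hkl hl
      exact ⟨_, T₁, hT₁, hrim.trans hlabel, hkeep, hreach⟩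

theorem exists_agreement (h : IsFan S v p m) (hT : IsLabeledSpokedPath S v p m i T)
    (hT' : IsLabeledSpokedPath S v p m j T') (hk : k < m) :
    ∃ i₁ T₁, IsLabeledSpokedPath S v p m i₁ T₁ ∧
      (∀ l < k, T₁.2 (rim p l) = T'.2 (rim p l)) ∧ ReachesIn (LabRotation S) (6 * k) T T₁ := by
  induction k with
  | zero => exact ⟨i, T, hT, by simp, .refl _ _⟩
  | succ k ih =>
    obtain ⟨i₁, T₁, hT₁, hagree₁, hreach₁⟩ := ih (by omega)
    obtain ⟨i₂, T₂, hT₂, hagree₂, hreach₂⟩ := h.exists_extend_agreement hT₁ hT' hk hagree₁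
    exact ⟨i₂, T₂, hT₂, hagree₂, hreach₁.trans hreach₂⟩

theorem eq_of_agreement (h : IsFan S v p m) (hT : IsLabeledSpokedPath S v p m j T)
    (hT' : IsLabeledSpokedPath S v p m j T')
    (hagree : ∀ i, i + 1 < m → T.2 (rim p i) = T'.2 (rim p i)) : T = T' := by
  obtain ⟨-, hbij, hzero⟩ := hT.isLabeledPST
  obtain ⟨-, hbij', hzero'⟩ := hT'.isLabeledPST
  have hfst : T.1 = T'.1 := hT.fst_eq.trans hT'.fst_eq.symm
  have hspoke : T.2 (spoke v p j) = T'.2 (spoke v p j) := by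
    obtain ⟨e, he, hlabel⟩ := hbij'.surjOn (hbij.mapsTo hT.spoke_mem)
    obtain rfl | ⟨i, hi, rfl⟩ := mem_spokedPath.1 (hT'.fst_eq ▸ he)
    · exact hlabel.symm
    · exact absurd (hbij.injOn (hT.rim_mem hi) hT.spoke_mem ((hagree i hi).trans hlabel))
        (h.spoke_ne_rim hi).symm
  refine Prod.ext hfst (funext fun e => ?_)
  by_cases he : e ∈ T.1
  · obtain rfl | ⟨i, hi, rfl⟩ := mem_spokedPath.1 (hT.fst_eq ▸ he)
    exacts [hspoke, hagree i hi]
  · rw [hzero e he, hzero' e (hfst ▸ he)]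

theorem reachesIn_of_spokedPath (h : IsFan S v p m) (hT : IsLabeledSpokedPath S v p m i T)
    (hT' : IsLabeledSpokedPath S v p m j T') :
    ReachesIn (LabRotation S) (7 * (m - 1)) T T' := by
  obtain ⟨i₁, T₁, hT₁, hagree, hreach₁⟩ :=
    h.exists_agreement hT hT' (Nat.sub_one_lt_of_lt hT.lt)
  obtain ⟨T₂, hT₂, -, hrim, hreach₂⟩ := h.exists_shift hT₁ hT'.lt
  obtain rfl := h.eq_of_agreement hT₂ hT' fun l hl => (hrim l hl).trans (hagree l (by omega))
  exact (hreach₁.trans hreach₂).mono (by omega)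

end IsFan

theorem IsViewpoint.exists_reachesIn_spokedPath {S : Finset Pt} {v : Pt} {A : Pt →ᵃ[ℝ] Pt}
    {p : ℕ → Pt} {T : LTree} (h : IsViewpoint S v A) (hS : GenPos S) (hcard : 2 ≤ S.card)
    (hp : IsFan S v p (S.card - 1)) (hT : IsLabeledPST S T) :
    ∃ T', IsLabeledSpokedPath S v p (S.card - 1) (S.card - 2) T' ∧
      ReachesIn (LabRotation S) (2 * (S.card - 2)) T T' := by
  obtain ⟨T₁, hT₁, hstar, hreach₁⟩ := h.exists_reachesIn_starAt hS hT
  obtain ⟨T₂, hT₂, hreach₂⟩ := hp.exists_reachesIn_spokedPath (by omega) hT₁ hstar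
  have hsdiff := hT.1.card_starAt_sdiff_le hcard h.mem
  exact ⟨T₂, hT₂, (hreach₁.trans hreach₂).mono (by omega)⟩

/-- on `n ≥ 2` points in general position, any two edge-labeled trees are
connected by at most `11n - 22` rotations. -/
theorem stmt_18 :
    ∀ S : Finset Pt, 2 ≤ S.card → GenPos S →
      ∀ T T' : LTree, IsLabeledPST S T → IsLabeledPST S T' →
        ReachesIn (LabRotation S) (11 * S.card - 22) T T' := by
  intro S hcard hS T T' hT hT'
  obtain ⟨v, A, hv⟩ := exists_isViewpoint (Finset.card_pos.1 (by omega : 0 < S.card))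
  obtain ⟨p, hp⟩ := hv.exists_isFan hS
  obtain ⟨P, hP, hTP⟩ := hv.exists_reachesIn_spokedPath hS hcard hp hT
  obtain ⟨P', hP', hTP'⟩ := hv.exists_reachesIn_spokedPath hS hcard hp hT'
  have hPP' := hp.reachesIn_of_spokedPath hP hP'
  have hPT' := hTP'.symm fun _ _ => LabRotation.symm
  exact ((hTP.trans hPP').trans hPT').mono (by omega)
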